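/- arXiv:1704.05667 — 9 statements merged into one kernel-verified Lean document; each statement's English description precedes it below -/
import Mathlib

section
/- Let A be a unital associative ℂ-algebra and let U ∈ A satisfy U^N = −1. Let w₀, w₂ ∈ ℂ with w₀ ≠ 0, w₀^N ≠ 1 and w₂^N = 1 − w₀^{−N}. Then Ψ_w(q²·U) = (w₀·1 + q^{−1}w₀w₂·U) · Ψ_w(U). -/
open Finset

/-- The operator `Ψ_w(U)` (with the scalar normalization `h(w₀)` omitted):
`Ψ_w(U) = Σ_{i=0}^{N−1} U^i ∏_{j=1}^{i} (−q⁻¹w₂)/(1 − w₀⁻¹q^{2j})`. -/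
noncomputable def Psi (N : ℕ) (q w₀ w₂ : ℂ) {A : Type*} [Ring A] [Algebra ℂ A] (U : A) : A :=
  ∑ i ∈ Finset.range N,
    (∏ j ∈ Finset.range i, (-q⁻¹ * w₂) / (1 - w₀⁻¹ * q ^ (2 * (j + 1)))) • U ^ i

theorem psi_prod_aux (N : ℕ) (hN : 0 < N) (z : ℂ) (hz : IsPrimitiveRoot z N) (y : ℂ) :
    ∏ j ∈ Finset.range N, (1 - y * z ^ (j + 1)) = 1 - y ^ N := by
  have h1 := hz.pow_sub_pow_eq_prod_sub_mul 1 y hN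
  rw [one_pow] at h1
  rw [h1]
  have hz0 : z ≠ 0 := hz.ne_zero hN.ne'
  refine Finset.prod_bij (fun j _ => z ^ (j + 1)) ?_ ?_ ?_ ?_
  · intro j _
    rw [Polynomial.mem_nthRootsFinset hN, ← pow_mul, mul_comm, pow_mul, hz.pow_eq_one, one_pow]
  · intro a ha b hb hab
    simp only [pow_succ] at hab
    exact hz.pow_inj (Finset.mem_range.1 ha) (Finset.mem_range.1 hb) (mul_right_cancel₀ hz0 hab)
  · intro b hb
    rw [Polynomial.mem_nthRootsFinset hN] at hb
    have hbz : (b * z⁻¹) ^ N = 1 := by rw [mul_pow, hb, inv_pow, hz.pow_eq_one]; simp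
    have : NeZero N := ⟨hN.ne'⟩
    obtain ⟨i, hi, h⟩ := hz.eq_pow_of_pow_eq_one hbz
    refine ⟨i, Finset.mem_range.2 hi, ?_⟩
    rw [pow_succ, h]
    field_simp
  · intro j _
    ring

/-- The Faddeev–Kashaev functional relation:
`Ψ_w(q²·U) = (w₀·1 + q⁻¹w₀w₂·U) · Ψ_w(U)` for `U^N = −1`. -/
theorem psi_functional_relation (N : ℕ) (hN : 3 ≤ N) (hNodd : Odd N)
    (q : ℂ) (hq : IsPrimitiveRoot q N)
    (A : Type*) [Ring A] [Algebra ℂ A] (U : A) (hU : U ^ N = -1)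
    (w₀ w₂ : ℂ) (hw₀ : w₀ ≠ 0) (hw₀N : w₀ ^ N ≠ 1) (hw₂ : w₂ ^ N = 1 - (w₀⁻¹) ^ N) :
    Psi N q w₀ w₂ ((q ^ 2) • U) =
      (w₀ • (1 : A) + (q⁻¹ * w₀ * w₂) • U) * Psi N q w₀ w₂ U := by
  have hN0 : 0 < N := by omega
  have hq0 : q ≠ 0 := hq.ne_zero hN0.ne'
  have hq2 : IsPrimitiveRoot (q ^ 2) N := hq.pow_of_coprime 2 hNodd.coprime_two_left
  have hprod := psi_prod_aux N hN0 (q ^ 2) hq2 w₀⁻¹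
  have hy : 1 - w₀⁻¹ ^ N ≠ 0 := by
    intro h
    apply hw₀N
    rw [inv_pow, sub_eq_zero] at h
    exact (inv_eq_one.1 h.symm)
  have hne : ∀ j : ℕ, 1 - w₀⁻¹ * q ^ (2 * (j + 1)) ≠ 0 := by
    intro j h
    apply hy
    have h2 : w₀⁻¹ * q ^ (2 * (j + 1)) = 1 := (sub_eq_zero.1 h).symm
    have h3 : (w₀⁻¹ * q ^ (2 * (j + 1))) ^ N = 1 := by rw [h2, one_pow]
    rw [mul_pow, ← pow_mul, mul_comm _ N, pow_mul, hq.pow_eq_one, one_pow, mul_one] at h3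
    rw [h3, sub_self]
  unfold Psi
  set c : ℕ → ℂ := fun i =>
    ∏ j ∈ Finset.range i, (-q⁻¹ * w₂) / (1 - w₀⁻¹ * q ^ (2 * (j + 1))) with hc
  have hc0 : c 0 = 1 := by simp [hc]
  have hcs : ∀ i, c (i + 1) * (w₀ - q ^ (2 * (i + 1))) = -(q⁻¹ * w₀ * w₂) * c i := by
    intro i
    have h : c (i + 1) = c i * ((-q⁻¹ * w₂) / (1 - w₀⁻¹ * q ^ (2 * (i + 1)))) := by
      simp only [hc, Finset.prod_range_succ]
    have h' : w₀ - q ^ (2 * (i + 1)) = w₀ * (1 - w₀⁻¹ * q ^ (2 * (i + 1))) := by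
      rw [mul_sub, mul_one, mul_inv_cancel_left₀ hw₀]
    rw [h, h', mul_assoc, mul_left_comm _ w₀, div_mul_cancel₀ _ (hne i)]
    ring
  have hcN : c N = -1 := by
    simp only [hc, Finset.prod_div_distrib, Finset.prod_const, Finset.card_range]
    simp only [← pow_mul] at hprod
    rw [hprod, mul_pow, hw₂, hNodd.neg_pow, inv_pow q, hq.pow_eq_one, inv_one, neg_one_mul, neg_div, div_self hy]
  have key : ∀ i : ℕ, (w₀ • (1 : A) + (q⁻¹ * w₀ * w₂) • U) * (c i • U ^ i)
      - c i • (q ^ 2 • U) ^ i = ((w₀ - q ^ (2 * i)) * c i) • U ^ i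
        - ((w₀ - q ^ (2 * (i + 1))) * c (i + 1)) • U ^ (i + 1) := by
    intro i
    rw [mul_comm _ (c (i + 1)), hcs, smul_pow, add_mul, smul_mul_smul_comm, smul_mul_smul_comm,
      one_mul, ← pow_succ', smul_smul, ← pow_mul]
    module
  rw [eq_comm, ← sub_eq_zero, Finset.mul_sum, ← Finset.sum_sub_distrib,
    Finset.sum_congr rfl (fun i _ => key i),
    Finset.sum_range_sub' (fun i => ((w₀ - q ^ (2 * i)) * c i) • U ^ i) N]
  rw [hc0, hcN, hU, mul_comm 2 N, pow_mul q N, hq.pow_eq_one]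
  simp only [mul_zero, pow_zero, one_pow, mul_one]
  module
end

section
/- Let w₀, w₂ ∈ ℂ with w₀ ≠ 0, w₀^N ≠ 1 and w₂^N = 1 − w₀^{−N}. Then ∏_{j=1}^{N} (−q^{−1}w₂)/(1 − w₀^{−1}q^{2j}) = −1. Consequently, if U is an element of a unital associative ℂ-algebra with U^N = −1, then for every i ≥ 0 one has U^{i+N} ∏_{j=1}^{i+N} (−q^{−1}w₂)/(1 − w₀^{−1}q^{2j}) = U^{i} ∏_{j=1}^{i} (−q^{−1}w₂)/(1 − w₀^{−1}q^{2j}); that is, the summands defining Ψ_w(U) are periodic in i with period N. -/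
open Finset

theorem prod_range_aux (N : ℕ) (hN : 0 < N) (p w : ℂ) (hp : IsPrimitiveRoot p N) :
    ∏ j ∈ Finset.range N, (1 - w * p ^ (j + 1)) = 1 - w ^ N := by
  have hp0 : p ≠ 0 := hp.ne_zero hN.ne'
  have h := hp.pow_sub_pow_eq_prod_sub_mul 1 w hN
  rw [one_pow] at h
  rw [h]
  refine Finset.prod_nbij (fun j => p ^ (j + 1)) ?_ ?_ ?_ ?_
  · intro j _
    rw [Polynomial.mem_nthRootsFinset hN, ← pow_mul, mul_comm, pow_mul, hp.pow_eq_one, one_pow]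
  · intro a ha b hb hab
    simp only [pow_succ] at hab
    exact hp.pow_inj (Finset.mem_range.1 ha) (Finset.mem_range.1 hb) (mul_right_cancel₀ hp0 hab)
  · intro z hz
    have hz' : z ^ N = 1 := (Polynomial.mem_nthRootsFinset hN _).1 hz
    have : NeZero N := ⟨hN.ne'⟩
    obtain ⟨k, hk, hk'⟩ := hp.eq_pow_of_pow_eq_one (ξ := z * p⁻¹)
      (by rw [mul_pow, hz', inv_pow, hp.pow_eq_one]; simp)
    refine ⟨k, by simpa using hk, ?_⟩
    simp only [pow_succ, hk']
    field_simp
  · intro j _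
    simp only [mul_comm]

/-- The product `∏_{j=1}^{N} (−q⁻¹w₂)/(1 − w₀⁻¹q^{2j})` equals `−1`, and consequently the
summands `U^i ∏_{j=1}^{i} (−q⁻¹w₂)/(1 − w₀⁻¹q^{2j})` defining `Ψ_w(U)` are periodic in `i`
with period `N` whenever `U^N = −1`. -/
theorem psi_summands_periodic (N : ℕ) (hN : 3 ≤ N) (hNodd : Odd N)
    (q : ℂ) (hq : IsPrimitiveRoot q N)
    (w₀ w₂ : ℂ) (hw₀ : w₀ ≠ 0) (hw₀N : w₀ ^ N ≠ 1) (hw₂ : w₂ ^ N = 1 - (w₀⁻¹) ^ N) :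
    (∏ j ∈ Finset.range N, (-q⁻¹ * w₂) / (1 - w₀⁻¹ * q ^ (2 * (j + 1)))) = -1 ∧
    ∀ (A : Type*) [Ring A] [Algebra ℂ A] (U : A), U ^ N = -1 → ∀ i : ℕ,
      (∏ j ∈ Finset.range (i + N), (-q⁻¹ * w₂) / (1 - w₀⁻¹ * q ^ (2 * (j + 1)))) •
          U ^ (i + N) =
        (∏ j ∈ Finset.range i, (-q⁻¹ * w₂) / (1 - w₀⁻¹ * q ^ (2 * (j + 1)))) • U ^ i := by
  have hpos : 0 < N := by omega
  have hp : IsPrimitiveRoot (q ^ 2) N :=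
    hq.pow_of_coprime 2 (Nat.coprime_two_left.2 hNodd)
  have hprod : (∏ j ∈ Finset.range N, (-q⁻¹ * w₂) / (1 - w₀⁻¹ * q ^ (2 * (j + 1)))) = -1 := by
    have hne : 1 - (w₀⁻¹) ^ N ≠ 0 := by
      intro h
      apply hw₀N
      rw [inv_pow] at h
      exact inv_eq_one.1 (sub_eq_zero.1 h).symm
    simp only [pow_mul]
    rw [Finset.prod_div_distrib, prod_range_aux N hpos _ _ hp, Finset.prod_const,
      Finset.card_range, mul_pow, hNodd.neg_pow, inv_pow, hq.pow_eq_one, hw₂, inv_one, neg_one_mul, neg_div, div_self hne]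
  refine ⟨hprod, ?_⟩
  intro A _ _ U hU i
  rw [add_comm i N, Finset.prod_range_add, hprod, pow_add, hU]
  have hper : ∀ j : ℕ, q ^ (2 * (N + j + 1)) = q ^ (2 * (j + 1)) := by
    intro j
    rw [show 2 * (N + j + 1) = N * 2 + 2 * (j + 1) by ring, pow_add, pow_mul, hq.pow_eq_one]
    simp
  simp only [hper]
  simp
end

section
/- Let w₀, w₂ ∈ ℂ with w₀ ≠ 0, w₀^N ≠ 1 and w₂^N = 1 − w₀^{−N}, and define ψ : ℂ → ℂ by ψ(u) = Σ_{i=0}^{N−1} u^i ∏_{j=1}^{i} (−q^{−1}w₂)/(1 − w₀^{−1}q^{2j}) (empty products equal 1). Then for every i = 0, 1, …, N−1 one has ψ(−q^{2i}) = (∏_{j=1}^{i} (w₀ − q^{2j−3}w₀w₂)) · ψ(−1). -/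
open Finset

/-- The scalar function `ψ(u) = Σ_{i=0}^{N−1} u^i ∏_{j=1}^{i} (−q⁻¹w₂)/(1 − w₀⁻¹q^{2j})`
(the paper's `Ψ_w` evaluated at scalars, normalization omitted) satisfies
`ψ(−q^{2i}) = (∏_{j=1}^{i} (w₀ − q^{2j−3}w₀w₂)) · ψ(−1)` for `0 ≤ i ≤ N−1`. -/
theorem psi_scalar_eigenvalues (N : ℕ) (hN : 3 ≤ N) (hNodd : Odd N)
    (q : ℂ) (hq : IsPrimitiveRoot q N)
    (w₀ w₂ : ℂ) (hw₀ : w₀ ≠ 0) (hw₀N : w₀ ^ N ≠ 1) (hw₂ : w₂ ^ N = 1 - (w₀⁻¹) ^ N)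
    (ψ : ℂ → ℂ)
    (hψ : ∀ u : ℂ, ψ u = ∑ i ∈ Finset.range N,
      u ^ i * ∏ j ∈ Finset.range i, (-q⁻¹ * w₂) / (1 - w₀⁻¹ * q ^ (2 * (j + 1)))) :
    ∀ i < N, ψ (-(q ^ (2 * i))) =
      (∏ j ∈ Finset.range i, (w₀ - q ^ (2 * (j : ℤ) - 1) * w₀ * w₂)) * ψ (-1) := by
  have hq0 : q ≠ 0 := hq.ne_zero (by omega)
  have hqN : q ^ N = 1 := hq.pow_eq_one
  have hq2 : IsPrimitiveRoot (q ^ 2) N :=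
    hq.pow_of_coprime 2 (Nat.coprime_two_left.mpr hNodd)
  have hprod : ∏ j ∈ Finset.range N, (1 - w₀⁻¹ * q ^ (2 * (j + 1))) = 1 - (w₀⁻¹) ^ N := by
    have hα : (q ^ 2 * w₀⁻¹) ^ N = (w₀⁻¹) ^ N := by
      rw [mul_pow, ← pow_mul, mul_comm 2 N, pow_mul, hqN, one_pow, one_mul]
    have h := congrArg (Polynomial.eval 1) (X_pow_sub_C_eq_prod hq2 (by omega) hα)
    simp only [Polynomial.eval_sub, Polynomial.eval_pow, Polynomial.eval_X, Polynomial.eval_C,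
      Polynomial.eval_prod, one_pow] at h
    rw [h]
    refine Finset.prod_congr rfl fun j _ => ?_
    ring
  have hne : (1 : ℂ) - (w₀⁻¹) ^ N ≠ 0 := by
    intro h
    apply hw₀N
    rw [inv_pow] at h
    exact inv_eq_one.mp (sub_eq_zero.mp h).symm
  have hd : ∀ j < N, 1 - w₀⁻¹ * q ^ (2 * (j + 1)) ≠ 0 := by
    intro j hj
    have h := hne
    rw [← hprod] at h
    exact Finset.prod_ne_zero_iff.mp h j (Finset.mem_range.mpr hj)
  obtain ⟨a, ha⟩ : ∃ a : ℕ → ℂ, a = fun i => ∏ j ∈ Finset.range i,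
    (-q⁻¹ * w₂) / (1 - w₀⁻¹ * q ^ (2 * (j + 1))) := ⟨_, rfl⟩
  have ha0 : a 0 = 1 := by simp [ha]
  have haN : a N = -1 := by
    rw [ha]
    simp only [Finset.prod_div_distrib, Finset.prod_const, Finset.card_range]
    rw [hprod, mul_pow, hNodd.neg_pow, inv_pow, hqN, hw₂, inv_one, neg_one_mul, neg_div,
      div_self hne]
  have hs : ∀ i < N, a (i + 1) * (1 - w₀⁻¹ * q ^ (2 * (i + 1))) = a i * (-q⁻¹ * w₂) := by
    intro i hi
    rw [ha]
    simp only [Finset.prod_range_succ]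
    have := hd i hi
    rw [mul_assoc, div_mul_cancel₀ _ this]
  have hψ' : ∀ u, ψ u = ∑ i ∈ Finset.range N, u ^ i * a i := by
    intro u
    rw [hψ, ha]
  have hrec : ∀ u : ℂ, u ^ N = -1 → ψ (q ^ 2 * u) = w₀ * (1 + u * q⁻¹ * w₂) * ψ u := by
    intro u hu
    have h1 : ψ u - w₀⁻¹ * ψ (q ^ 2 * u)
        = ∑ i ∈ Finset.range N, u ^ i * a i * (1 - w₀⁻¹ * q ^ (2 * i)) := by
      rw [hψ', hψ', Finset.mul_sum, ← Finset.sum_sub_distrib]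
      refine Finset.sum_congr rfl fun i _ => ?_
      ring
    have h2 : ∑ i ∈ Finset.range N, u ^ (i + 1) * a (i + 1) * (1 - w₀⁻¹ * q ^ (2 * (i + 1)))
        = u * (-q⁻¹ * w₂) * ψ u := by
      rw [hψ', Finset.mul_sum]
      refine Finset.sum_congr rfl fun i hi => ?_
      rw [mul_assoc, hs i (Finset.mem_range.mp hi)]
      ring
    have h3 := Finset.sum_range_succ
      (fun i => u ^ i * a i * (1 - w₀⁻¹ * q ^ (2 * i))) N
    rw [Finset.sum_range_succ'] at h3
    have hqq : q ^ (2 * N) = 1 := by rw [mul_comm, pow_mul, hqN, one_pow]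
    simp only [h2, ← h1, hu, haN, ha0, hqq, mul_zero, pow_zero] at h3
    have h4 : w₀⁻¹ * ψ (q ^ 2 * u) = (1 + u * q⁻¹ * w₂) * ψ u := by
      linear_combination h3
    rw [mul_assoc, ← h4, mul_inv_cancel_left₀ hw₀]
  intro i _
  induction i with
  | zero => simp
  | succ k ih =>
    have hu : (-(q ^ (2 * k))) ^ N = -1 := by
      rw [hNodd.neg_pow, ← pow_mul, mul_comm, pow_mul, hqN, one_pow]
    have h := hrec _ hu
    have e : q ^ 2 * -(q ^ (2 * k)) = -(q ^ (2 * (k + 1))) := by ring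
    have ez : q ^ (2 * (k : ℤ) - 1) = q ^ (2 * k) * q⁻¹ := by
      rw [zpow_sub₀ hq0, zpow_one, div_eq_mul_inv]
      norm_cast
    rw [← e, h, ih (by omega), Finset.prod_range_succ, ez]
    ring
end

section
/- The operator Q_N^T is invertible and satisfies Q_N^T ∘ A₀ = A₂ ∘ Q_N^T, Q_N^T ∘ A₁ = A₀ ∘ Q_N^T, and Q_N^T ∘ A₂ = A₁ ∘ Q_N^T; equivalently, Q_N^T A_i (Q_N^T)^{−1} = A_{i−1} for every i, indices taken modulo 3. -/
open Finset

/-- `A₀ e_k = q^{2k} e_k` on `ℂ^N` (basis indexed by `ZMod N`). -/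
noncomputable def A0 (N : ℕ) (q : ℂ) : Matrix (ZMod N) (ZMod N) ℂ :=
  Matrix.diagonal fun k => q ^ (2 * k.val)

/-- `A₁ e_k = e_{k+1}`. -/
noncomputable def A1 (N : ℕ) : Matrix (ZMod N) (ZMod N) ℂ :=
  fun j k => if j = k + 1 then 1 else 0

/-- `A₂ e_k = q^{1−2k} e_{k−1}`. -/
noncomputable def A2 (N : ℕ) (q : ℂ) : Matrix (ZMod N) (ZMod N) ℂ :=
  fun j k => if j = k - 1 then q ^ ((1 : ℤ) - 2 * (k.val : ℤ)) else 0

/-- `Q_N^T e_k = N^{−1/2} Σ_{j=0}^{N−1} q^{2kj + j²} e_j`. -/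
noncomputable def QNT (N : ℕ) (q : ℂ) : Matrix (ZMod N) (ZMod N) ℂ :=
  fun j k => ((Real.sqrt N : ℂ))⁻¹ * q ^ (2 * k.val * j.val + j.val ^ 2)

theorem nat_pow_eq_char (N : ℕ) [NeZero N] (q : ℂ) (h : q ^ N = 1) (n : ℕ) :
    q ^ n = AddChar.zmodChar N h (n : ZMod N) := (AddChar.zmodChar_apply' h n).symm

theorem int_pow_eq_char (N : ℕ) [NeZero N] (q : ℂ) (h : q ^ N = 1) (n : ℤ) :
    q ^ n = AddChar.zmodChar N h (n : ZMod N) := by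
  have h1 : q = AddChar.zmodChar N h (1 : ZMod N) := by
    have := nat_pow_eq_char N q h 1
    simpa using this
  have := AddChar.map_zsmul_eq_zpow (AddChar.zmodChar N h) n (1 : ZMod N)
  rw [← h1] at this
  rw [← this]
  simp

theorem QNT_char (N : ℕ) [NeZero N] (q : ℂ) (h : q ^ N = 1) (j k : ZMod N) :
    QNT N q j k = ((Real.sqrt N : ℂ))⁻¹ * AddChar.zmodChar N h (2 * k * j + j ^ 2) := by
  rw [QNT, nat_pow_eq_char N q h]
  simp

theorem A2_char (N : ℕ) [NeZero N] (q : ℂ) (h : q ^ N = 1) (j k : ZMod N) :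
    A2 N q j k = if j = k - 1 then AddChar.zmodChar N h (1 - 2 * k) else 0 := by
  rw [A2, int_pow_eq_char N q h]
  simp

/-- `Q_N^T` is invertible and conjugates `A_i` to `A_{i−1}` (indices mod 3):
`Q_N^T A₀ = A₂ Q_N^T`, `Q_N^T A₁ = A₀ Q_N^T`, `Q_N^T A₂ = A₁ Q_N^T`. -/
theorem QNT_conjugates (N : ℕ) [NeZero N] (hN : 3 ≤ N) (hNodd : Odd N)
    (q : ℂ) (hq : IsPrimitiveRoot q N) :
    IsUnit (QNT N q) ∧
    QNT N q * A0 N q = A2 N q * QNT N q ∧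
    QNT N q * A1 N = A0 N q * QNT N q ∧
    QNT N q * A2 N q = A1 N * QNT N q := by
  have h : q ^ N = 1 := hq.pow_eq_one
  have hprim := AddChar.zmodChar_primitive_of_primitive_root N hq
  have hA0 : ∀ k : ZMod N, q ^ (2 * k.val) = AddChar.zmodChar N h (2 * k) := by
    intro k
    rw [nat_pow_eq_char N q h]
    simp
  have h2 : IsUnit (2 : ZMod N) := by
    have := (ZMod.isUnit_iff_coprime 2 N).2 (Nat.coprime_two_left.2 hNodd)
    simpa using this
  refine ⟨?_, ?_, ?_, ?_⟩
  · refine IsUnit.of_mul_eq_one_right (Matrix.of fun k j : ZMod N =>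
      ((Real.sqrt N : ℂ))⁻¹ * AddChar.zmodChar N h (-(2 * k * j + j ^ 2))) ?_
    ext k l
    have hs : ((Real.sqrt N : ℂ))⁻¹ * ((Real.sqrt N : ℂ))⁻¹ = (N : ℂ)⁻¹ := by
      rw [← mul_inv, ← Complex.ofReal_mul, Real.mul_self_sqrt (Nat.cast_nonneg N)]
      simp
    have hsum := AddChar.sum_mulShift (2 * (l - k)) hprim
    have h0 : 2 * (l - k) = 0 ↔ k = l := by
      rw [h2.mul_right_eq_zero, sub_eq_zero, eq_comm]
    rw [Matrix.mul_apply, Matrix.one_apply]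
    calc _ = ∑ j : ZMod N, (N : ℂ)⁻¹ * AddChar.zmodChar N h (j * (2 * (l - k))) := by
          refine Finset.sum_congr rfl fun j _ => ?_
          rw [Matrix.of_apply, QNT_char N q h, mul_mul_mul_comm, hs, ← AddChar.map_add_eq_mul]
          congr 2
          ring
      _ = _ := by
          rw [← Finset.mul_sum, hsum]
          simp only [h0, ZMod.card]
          have : (N : ℂ) ≠ 0 := Nat.cast_ne_zero.2 (NeZero.ne N)
          split_ifs <;> simp [this]
  · ext j k
    rw [A0, Matrix.mul_diagonal, Matrix.mul_apply, Finset.sum_eq_single (j + 1)]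
    · rw [A2_char N q h, if_pos (by ring), QNT_char N q h, QNT_char N q h, hA0, mul_assoc,
        mul_left_comm (AddChar.zmodChar N h (1 - 2 * (j + 1))), ← AddChar.map_add_eq_mul,
        ← AddChar.map_add_eq_mul]
      congr 2
      ring
    · intro b _ hb
      rw [A2_char N q h, if_neg (fun e => hb (by rw [e]; ring)), zero_mul]
    · simp
  · ext j k
    rw [A0, Matrix.diagonal_mul, Matrix.mul_apply, Finset.sum_eq_single (k + 1)]
    · rw [A1, if_pos rfl, QNT_char N q h, QNT_char N q h, hA0, mul_one,
        mul_left_comm, ← AddChar.map_add_eq_mul]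
      congr 2
      ring
    · intro b _ hb
      rw [A1, if_neg hb, mul_zero]
    · simp
  · ext j k
    rw [Matrix.mul_apply, Matrix.mul_apply, Finset.sum_eq_single (k - 1),
      Finset.sum_eq_single (j - 1)]
    · rw [A1, if_pos (by ring), A2_char N q h, if_pos rfl, QNT_char N q h, QNT_char N q h,
        one_mul, mul_assoc, ← AddChar.map_add_eq_mul]
      congr 2
      ring
    · intro b _ hb
      rw [A1, if_neg (fun e => hb (by rw [e]; ring)), zero_mul]
    · simp
    · intro b _ hb
      rw [A2_char N q h, if_neg hb, mul_zero]
    · simp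
end

section
/- One has (Q_N^T)³ = g · id_{ℂ^N}, where g = N^{−1/2} Σ_{m=0}^{N−1} q^{m²}, and this scalar satisfies g⁴ = 1. In particular Q_N^T is invertible and has order 3 up to multiplication by fourth roots of unity. -/
open Finset

lemma two_unit_aux (N : ℕ) (hNodd : Odd N) : IsUnit (2 : ZMod N) := by
  have := (ZMod.isUnit_iff_coprime 2 N).2 (Nat.coprime_two_left.2 hNodd)
  exact_mod_cast this

lemma two_mul_aux (N : ℕ) (hNodd : Odd N) (c : ZMod N) : 2 * c = 0 ↔ c = 0 :=
  (two_unit_aux N hNodd).mul_right_eq_zero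

lemma gauss_norm_aux (N : ℕ) [NeZero N] (hNodd : Odd N) (ψ : AddChar (ZMod N) ℂ)
    (hψ : ψ.IsPrimitive) : (∑ a, ψ (a ^ 2)) * (∑ b, ψ (-(b ^ 2))) = N := by
  rw [Finset.sum_mul_sum, Finset.sum_comm]
  have h1 : ∀ b : ZMod N, ∑ a, ψ (a ^ 2) * ψ (-(b ^ 2))
      = ∑ c, ψ (c ^ 2) * ψ (b * (2 * c)) := by
    intro b
    rw [← Equiv.sum_comp (Equiv.addRight b)]
    refine Finset.sum_congr rfl fun c _ => ?_
    rw [← AddChar.map_add_eq_mul, ← AddChar.map_add_eq_mul]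
    congr 1
    simp only [Equiv.coe_addRight]
    ring
  simp_rw [h1]
  rw [Finset.sum_comm]
  simp_rw [← Finset.mul_sum, AddChar.sum_mulShift _ hψ, two_mul_aux N hNodd]
  simp

lemma exists_sq_aux (N : ℕ) [NeZero N] (hNodd : Odd N) :
    ∃ x y : ZMod N, x ^ 2 + y ^ 2 = -1 := by
  obtain ⟨k, hk⟩ := hNodd
  have hcop : Nat.Coprime (4 * k + 1) (4 * N) := by
    have h : 4 * N = 2 * (4 * k + 1) + 2 := by omega
    rw [h, Nat.coprime_mul_right_add_right, Nat.coprime_two_right]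
    exact ⟨2 * k, by ring⟩
  obtain ⟨p, -, hp, hpm⟩ := Nat.forall_exists_prime_gt_and_modEq 0 (by have := NeZero.ne N; omega) hcop
  haveI : Fact p.Prime := ⟨hp⟩
  have h4 : p ≡ 4 * k + 1 [MOD 4] := hpm.of_dvd ⟨N, rfl⟩
  have h5 : p ≡ 4 * k + 1 [MOD N] := hpm.of_dvd ⟨4, by ring⟩
  obtain ⟨a, b, hab⟩ := Nat.Prime.sq_add_sq (p := p) (by unfold Nat.ModEq at h4; omega)
  refine ⟨a, b, ?_⟩
  have h6 := (ZMod.natCast_eq_natCast_iff _ _ _).2 h5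
  rw [← hab] at h6
  push_cast at h6
  rw [h6]
  have h7 : ((2 * k + 1 : ℕ) : ZMod N) = 0 := by rw [← hk]; simp
  push_cast at h7
  linear_combination 2 * h7

lemma gauss_sq_aux (N : ℕ) [NeZero N] (hNodd : Odd N) (ψ : AddChar (ZMod N) ℂ) :
    (∑ a, ψ (a ^ 2)) ^ 2 = (∑ b, ψ (-(b ^ 2))) ^ 2 := by
  obtain ⟨x, y, hxy⟩ := exists_sq_aux N hNodd
  let e : ZMod N × ZMod N ≃ ZMod N × ZMod N :=
    { toFun := fun c => (x * c.1 - y * c.2, y * c.1 + x * c.2)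
      invFun := fun c => (-(x * c.1 + y * c.2), -(-y * c.1 + x * c.2))
      left_inv := fun c => by
        ext
        · simp only; linear_combination (-c.1) * hxy
        · simp only; linear_combination (-c.2) * hxy
      right_inv := fun c => by
        ext
        · simp only; linear_combination (-c.1) * hxy
        · simp only; linear_combination (-c.2) * hxy }
  rw [sq, sq, Finset.sum_mul_sum, Finset.sum_mul_sum, ← Finset.sum_product', ← Finset.sum_product',
    Finset.univ_product_univ, ← Equiv.sum_comp e]
  refine Finset.sum_congr rfl fun c _ => ?_
  rw [← AddChar.map_add_eq_mul, ← AddChar.map_add_eq_mul]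
  congr 1
  simp only [e, Equiv.coe_fn_mk]
  linear_combination (c.1 ^ 2 + c.2 ^ 2) * hxy

lemma cube_aux (N : ℕ) [NeZero N] (hNodd : Odd N) (ψ : AddChar (ZMod N) ℂ)
    (hψ : ψ.IsPrimitive) (j k : ZMod N) :
    ∑ b, (∑ a, ψ (2 * a * j + j ^ 2) * ψ (2 * b * a + a ^ 2)) * ψ (2 * k * b + b ^ 2)
      = if j = k then N * ∑ a, ψ (a ^ 2) else 0 := by
  simp_rw [Finset.sum_mul]
  rw [Finset.sum_comm]
  have h1 : ∀ a : ZMod N, ∑ b, ψ (2 * a * j + j ^ 2) * ψ (2 * b * a + a ^ 2) * ψ (2 * k * b + b ^ 2)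
      = ∑ c, ψ (j ^ 2 - k ^ 2 + c ^ 2) * ψ (a * (2 * (j - k))) := by
    intro a
    rw [← Equiv.sum_comp (Equiv.subRight (a + k))]
    refine Finset.sum_congr rfl fun c _ => ?_
    simp only [← AddChar.map_add_eq_mul]
    congr 1
    simp only [Equiv.subRight_apply]
    ring
  simp_rw [h1]
  rw [Finset.sum_comm]
  simp_rw [← Finset.mul_sum, AddChar.sum_mulShift _ hψ, two_mul_aux N hNodd, sub_eq_zero]
  split_ifs with h
  · subst h
    simp [Finset.mul_sum, mul_comm]
  · simp

theorem QNT_cube (N : ℕ) [NeZero N] (hN : 3 ≤ N) (hNodd : Odd N)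
    (q : ℂ) (hq : IsPrimitiveRoot q N) :
    QNT N q ^ 3 =
      (((Real.sqrt N : ℂ))⁻¹ * ∑ m ∈ Finset.range N, q ^ m ^ 2) •
        (1 : Matrix (ZMod N) (ZMod N) ℂ) ∧
    (((Real.sqrt N : ℂ))⁻¹ * ∑ m ∈ Finset.range N, q ^ m ^ 2) ^ 4 = 1 ∧
    IsUnit (QNT N q) := by
  have hψ := AddChar.zmodChar_primitive_of_primitive_root N hq
  have happ := fun a : ℕ => AddChar.zmodChar_apply' (n := N) ((IsPrimitiveRoot.iff_def q N).mp hq).left a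
  generalize AddChar.zmodChar N ((IsPrimitiveRoot.iff_def q N).mp hq).left = ψ at hψ happ
  have hG : ∑ m ∈ Finset.range N, q ^ m ^ 2 = ∑ a, ψ (a ^ 2) := by
    refine Finset.sum_bij' (fun m _ => (m : ZMod N)) (fun a _ => a.val) ?_ ?_ ?_ ?_ ?_
    · simp
    · intro a _; simpa using ZMod.val_lt a
    · intro m hm; exact ZMod.val_cast_of_lt (by simpa using hm)
    · simp
    · intro m _; rw [← happ]; push_cast; rfl
  have hQ : ∀ j k, QNT N q j k = ((Real.sqrt N : ℂ))⁻¹ * ψ (2 * k * j + j ^ 2) := by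
    intro j k
    rw [QNT, ← happ]
    simp
  rw [hG]
  have hN0 : (N : ℂ) ≠ 0 := by exact_mod_cast NeZero.ne N
  have hs : (((Real.sqrt N : ℝ) : ℂ))⁻¹ ^ 2 * N = 1 := by
    have : ((Real.sqrt N : ℝ) : ℂ) ^ 2 = N := by
      rw [← Complex.ofReal_pow, Real.sq_sqrt (Nat.cast_nonneg N)]; simp
    rw [inv_pow, this, inv_mul_cancel₀ hN0]
  generalize (((Real.sqrt N : ℝ) : ℂ))⁻¹ = s at hs hQ
  have hcube : QNT N q ^ 3 = (s * ∑ a, ψ (a ^ 2)) • (1 : Matrix (ZMod N) (ZMod N) ℂ) := by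
    ext j k
    have h2 : (QNT N q ^ 3) j k = s ^ 3 * ∑ b, (∑ a, ψ (2 * a * j + j ^ 2) *
        ψ (2 * b * a + a ^ 2)) * ψ (2 * k * b + b ^ 2) := by
      rw [pow_succ, pow_two, Matrix.mul_apply, Finset.mul_sum]
      refine Finset.sum_congr rfl fun b _ => ?_
      rw [Matrix.mul_apply, hQ, Finset.sum_mul, Finset.sum_mul, Finset.mul_sum]
      refine Finset.sum_congr rfl fun a _ => ?_
      rw [hQ, hQ]; ring
    rw [h2, cube_aux N hNodd ψ hψ, Matrix.smul_apply, Matrix.one_apply]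
    split_ifs
    · simp only [smul_eq_mul]
      linear_combination (s * ∑ a, ψ (a ^ 2)) * hs
    · simp
  have h4 : (s * ∑ a, ψ (a ^ 2)) ^ 4 = 1 := by
    have e1 := gauss_norm_aux N hNodd ψ hψ
    have e2 := gauss_sq_aux N hNodd ψ
    generalize ∑ a, ψ (a ^ 2) = G at e1 e2 ⊢
    generalize ∑ b, ψ (-(b ^ 2)) = H at e1 e2
    calc (s * G) ^ 4 = s ^ 4 * (G ^ 2 * G ^ 2) := by ring
      _ = s ^ 4 * (G ^ 2 * H ^ 2) := by rw [← e2]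
      _ = s ^ 4 * (G * H) ^ 2 := by ring
      _ = (s ^ 2 * N) ^ 2 := by rw [e1]; ring
      _ = 1 := by rw [hs]; ring
  refine ⟨hcube, h4, ?_⟩
  have h12 : QNT N q ^ 12 = 1 := by
    rw [show 12 = 3 * 4 from rfl, pow_mul, hcube, smul_pow, h4]; simp
  exact IsUnit.of_pow_eq_one h12 (by norm_num)
end

section
/- Let c₀, c₁, c₂, d₀, d₁, d₂ be nonzero complex numbers and set w₂ := −q·c₁d₀. Let w₀, w₁ be nonzero complex numbers such that (w₀, w₁, w₂) is a triple of quantum shape parameters, let a₂, b₁ be nonzero complex numbers with a₂b₁ = −q·w₂^{−1}, and set a₀ := w₀^{−1}c₀, a₁ := w₁^{−1}d₁, b₀ := w₁^{−1}c₂, b₂ := w₀^{−1}d₂. Then the operator ℒ satisfies the following five identities in End(ℂ^N ⊗ ℂ^N), where I = id_{ℂ^N}: (i) ℒ ∘ (c₁d₀ (A₁⊗A₀))^{−1} = a₂b₁ (A₂⊗A₁) ∘ ℒ; (ii) ℒ ∘ (I⊗I + q·c₁d₀ (A₁⊗A₀)) ∘ (c₀ A₀⊗I) = a₀ (A₀⊗I)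 ∘ ℒ; (iii) ℒ ∘ (I⊗I + q·c₁d₀ (A₁⊗A₀)) ∘ (d₂ I⊗A₂) = b₂ (I⊗A₂) ∘ ℒ; (iv) ℒ ∘ (d₁ I⊗A₁) = (I⊗I + q·a₂b₁ (A₂⊗A₁)) ∘ (a₁ A₁⊗I) ∘ ℒ; (v) ℒ ∘ (c₂ A₂⊗I) = (I⊗I + q·a₂b₁ (A₂⊗A₁)) ∘ (b₀ I⊗A₀) ∘ ℒ. (These identities say that the transposed basic matrix dilogarithm intertwines the standard local representation X₁ ↦ c₀A₀⊗I, X₂ ↦ d₁I⊗A₁, X₃ ↦ d₂I⊗A₂, X₄ ↦ c₂A₂⊗I, X₅ ↦ c₁d₀A₁⊗A₀ of the Chekhov–Fock algebra of an ideally triangulated square with the standard local representation X₁' ↦ a₀A₀⊗I, X₂' ↦ a₁A₁⊗I, X₃' ↦ b₂I⊗A₂, X₄' ↦ b₀I⊗A₀, X₅' ↦ a₂b₁A₂⊗A₁ of the flipped square, via the coordinate-change isomorphism of a diagonal exchange.) -/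
open Finset Kronecker

/-- `Υ := (1/N) Σ_{i,j=0}^{N−1} q^{−2ij−j} A₀^i ⊗ (A₁A₀)^{−j}` on `ℂ^N ⊗ ℂ^N`. -/
noncomputable def Ups (N : ℕ) [NeZero N] (q : ℂ) :
    Matrix (ZMod N × ZMod N) (ZMod N × ZMod N) ℂ :=
  (N : ℂ)⁻¹ • ∑ i ∈ Finset.range N, ∑ j ∈ Finset.range N,
    (q ^ (-(2 * (i : ℤ) * (j : ℤ) + (j : ℤ)))) • ((A0 N q ^ i) ⊗ₖ ((A1 N * A0 N q)⁻¹ ^ j))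

/-- `ℒ := Ψ_w(−A₀A₁ ⊗ A₁⁻¹) ∘ Υ`, the transposed basic matrix dilogarithm (up to the
scalar normalization `h(w₀)`). -/
noncomputable def Ldil (N : ℕ) [NeZero N] (q w₀ w₂ : ℂ) :
    Matrix (ZMod N × ZMod N) (ZMod N × ZMod N) ℂ :=
  Psi N q w₀ w₂ (-((A0 N q * A1 N) ⊗ₖ (A1 N)⁻¹)) * Ups N q

set_option linter.unusedSimpArgs false
set_option linter.unusedSectionVars false

section helpers

variable {A : Type*} [Ring A] [Algebra ℂ A]

lemma psi_semiconj (N : ℕ) (q w₀ w₂ : ℂ) {U Uinv Z : A} (h : Uinv * Z = Z * U) :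
    Psi N q w₀ w₂ Uinv * Z = Z * Psi N q w₀ w₂ U := by
  have hs : SemiconjBy Z U Uinv := h.symm
  unfold Psi
  rw [Finset.sum_mul, Finset.mul_sum]
  refine Finset.sum_congr rfl fun i _ => ?_
  rw [smul_mul_assoc, mul_smul_comm, (hs.pow_right i).eq]

lemma prod_one_sub {N : ℕ} [NeZero N] {z : ℂ} (hz : IsPrimitiveRoot z N) (x : ℂ) :
    ∏ j ∈ Finset.range N, (1 - x * z ^ (j + 1)) = 1 - x ^ N := by
  have h1 := congrArg (Polynomial.eval 1) (X_pow_sub_C_eq_prod hz (NeZero.pos N) (rfl : x ^ N = x ^ N))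
  simp only [Polynomial.eval_prod, Polynomial.eval_sub, Polynomial.eval_pow, Polynomial.eval_X,
    Polynomial.eval_C, one_pow] at h1
  rw [h1]
  have h2 : ∏ j ∈ Finset.range N, (1 - x * z ^ (j + 1)) =
      ∏ j ∈ Finset.range N, (1 - x * z ^ j) := by
    have e1 := Finset.prod_range_succ (fun j => (1 - x * z ^ j)) N
    have e2 := Finset.prod_range_succ' (fun j => (1 - x * z ^ j)) N
    rw [e1] at e2
    simp only [hz.pow_eq_one, pow_zero] at e2
    by_cases h0 : (1 - x * 1) = 0
    · have hx : x = 1 := by linear_combination -h0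
      subst hx
      rw [Finset.prod_eq_zero (i := N - 1), Finset.prod_eq_zero (i := 0)]
      · simp [NeZero.pos N]
      · simp
      · simp [NeZero.pos N]
      · rw [Nat.sub_add_cancel (NeZero.pos N), hz.pow_eq_one]; ring
    · exact (mul_right_cancel₀ h0 e2).symm
  rw [h2]
  exact Finset.prod_congr rfl fun j _ => by rw [mul_comm]

lemma psi_func (N : ℕ) [NeZero N] (q w₀ w₂ : ℂ) (hq2 : IsPrimitiveRoot (q ^ 2) N) (hq : q ^ N = 1)
    (hodd : Odd N) (hw₂ : w₂ ≠ 0) (hshape : w₂ ^ N = 1 - (w₀⁻¹) ^ N) (U : A) (hU : U ^ N = -1) :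
    w₀⁻¹ • Psi N q w₀ w₂ ((q ^ 2) • U) = (1 + (q⁻¹ * w₂) • U) * Psi N q w₀ w₂ U := by
  have hprod := prod_one_sub hq2 w₀⁻¹
  rw [← hshape] at hprod
  have hne : ∀ j ∈ Finset.range N, (1 - w₀⁻¹ * (q ^ 2) ^ (j + 1)) ≠ 0 := by
    rw [← Finset.prod_ne_zero_iff, hprod]
    exact pow_ne_zero _ hw₂
  set c : ℕ → ℂ := fun i =>
    ∏ j ∈ Finset.range i, (-q⁻¹ * w₂) / (1 - w₀⁻¹ * q ^ (2 * (j + 1))) with hc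
  have hcs : ∀ i ∈ Finset.range N,
      c (i + 1) * (1 - w₀⁻¹ * (q ^ 2) ^ (i + 1)) = (-q⁻¹ * w₂) * c i := by
    intro i hi
    have := hne i hi
    simp only [hc, Finset.prod_range_succ, pow_mul]
    rw [mul_assoc, div_mul_cancel₀ _ this, mul_comm]
  have hcN : c N = -1 := by
    simp only [hc, Finset.prod_div_distrib, pow_mul, hprod]
    rw [Finset.prod_const, Finset.card_range, mul_pow, hodd.neg_pow, inv_pow, hq]
    have := pow_ne_zero N hw₂
    field_simp
  have hc0 : c 0 = 1 := by simp [hc]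
  have key : ∑ i ∈ Finset.range N, (c i * (1 - w₀⁻¹ * (q ^ 2) ^ i)) • U ^ i =
      ∑ i ∈ Finset.range N, (c (i + 1) * (1 - w₀⁻¹ * (q ^ 2) ^ (i + 1))) • U ^ (i + 1) := by
    have e1 := Finset.sum_range_succ (fun i => (c i * (1 - w₀⁻¹ * (q ^ 2) ^ i)) • U ^ i) N
    have e2 := Finset.sum_range_succ' (fun i => (c i * (1 - w₀⁻¹ * (q ^ 2) ^ i)) • U ^ i) N
    rw [e1] at e2
    simp only [hcN, hc0, hU, hq2.pow_eq_one, pow_zero] at e2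
    rw [neg_one_mul, neg_smul_neg, one_mul] at e2
    exact add_right_cancel e2
  have e3 : ∑ i ∈ Finset.range N, (c (i + 1) * (1 - w₀⁻¹ * (q ^ 2) ^ (i + 1))) • U ^ (i + 1) =
      ((-q⁻¹ * w₂) • U) * ∑ i ∈ Finset.range N, c i • U ^ i := by
    rw [Finset.mul_sum]
    refine Finset.sum_congr rfl fun i hi => ?_
    rw [hcs i hi, smul_mul_smul_comm, pow_succ']
  have e4 : ∑ i ∈ Finset.range N, (c i * (1 - w₀⁻¹ * (q ^ 2) ^ i)) • U ^ i =
      ∑ i ∈ Finset.range N, c i • U ^ i -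
        w₀⁻¹ • ∑ i ∈ Finset.range N, c i • ((q ^ 2) • U) ^ i := by
    rw [Finset.smul_sum, ← Finset.sum_sub_distrib]
    refine Finset.sum_congr rfl fun i _ => ?_
    rw [smul_pow, smul_smul, smul_smul, ← sub_smul]
    congr 1; ring
  rw [e4, e3] at key
  change w₀⁻¹ • ∑ i ∈ Finset.range N, c i • ((q ^ 2) • U) ^ i =
    (1 + (q⁻¹ * w₂) • U) * ∑ i ∈ Finset.range N, c i • U ^ i
  rw [add_mul, one_mul]
  rw [neg_mul, neg_smul, neg_mul] at key
  rw [← sub_eq_zero] at key ⊢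
  rw [← neg_eq_zero, ← key]
  abel

/-- discrete Gaussian-type kernel -/
noncomputable def FF (N : ℕ) (r : ℂ) (P Q : A) : A :=
  ∑ i ∈ Finset.range N, ∑ j ∈ Finset.range N, r ^ (i * j) • (P ^ i * Q ^ j)

lemma FF_semiconj (N : ℕ) (r : ℂ) {P Q Pinv Qinv Z : A} (hP : Pinv * Z = Z * P) (hQ : Qinv * Z = Z * Q) :
    FF N r Pinv Qinv * Z = Z * FF N r P Q := by
  have h1 : SemiconjBy Z P Pinv := hP.symm
  have h2 : SemiconjBy Z Q Qinv := hQ.symm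
  unfold FF
  simp only [Finset.sum_mul, Finset.mul_sum]
  refine Finset.sum_congr rfl fun i _ => Finset.sum_congr rfl fun j _ => ?_
  rw [smul_mul_assoc, mul_smul_comm, ((h1.pow_right i).mul_right (h2.pow_right j)).eq]

lemma sum_shift (N : ℕ) (f : ℕ → A) (h : f N = f 0) :
    ∑ i ∈ Finset.range N, f (i + 1) = ∑ i ∈ Finset.range N, f i := by
  have e1 := Finset.sum_range_succ f N
  rw [Finset.sum_range_succ' f N, h] at e1
  exact add_right_cancel e1

lemma FF_left (N : ℕ) (r : ℂ) (hr : r ^ N = 1) {P Q : A} (hQ : Q ^ N = 1) :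
    FF N r (r • P) Q * Q = FF N r P Q := by
  unfold FF
  rw [Finset.sum_mul]
  refine Finset.sum_congr rfl fun i _ => ?_
  rw [← sum_shift N (fun j => r ^ (i * j) • (P ^ i * Q ^ j)), Finset.sum_mul]
  · refine Finset.sum_congr rfl fun j _ => ?_
    rw [smul_pow, smul_mul_assoc, smul_mul_assoc, smul_mul_assoc, smul_smul, ← pow_add, mul_assoc,
      ← pow_succ, Nat.mul_succ]
  · simp [hQ, mul_comm i N, pow_mul, hr]

lemma FF_right (N : ℕ) (r : ℂ) (hr : r ^ N = 1) {P Q : A} (hP : P ^ N = 1) (hPQ : P * Q = Q * P) :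
    FF N r P (r • Q) * P = FF N r P Q := by
  have h : Commute P Q := hPQ
  unfold FF
  rw [Finset.sum_comm, Finset.sum_comm (s := Finset.range N), Finset.sum_comm,
    Finset.sum_comm (s := Finset.range N) (t := Finset.range N)
      (f := fun i j => r ^ (i * j) • (P ^ i * Q ^ j)), Finset.sum_mul]
  refine Finset.sum_congr rfl fun j _ => ?_
  rw [← sum_shift N (fun i => r ^ (i * j) • (P ^ i * Q ^ j)), Finset.sum_mul]
  · refine Finset.sum_congr rfl fun i _ => ?_
    rw [smul_pow, mul_smul_comm, smul_mul_assoc, smul_mul_assoc, smul_smul, ← pow_add, mul_assoc,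
      ← (h.pow_right j).eq, ← mul_assoc, ← pow_succ, Nat.succ_mul]
  · simp [hP, pow_mul, hr]

end helpers

section mats

variable {N : ℕ} [NeZero N]

lemma qpow_val {q : ℂ} (hq : q ^ N = 1) (k : ZMod N) :
    q ^ (2 * (k + 1).val) = q ^ 2 * q ^ (2 * k.val) := by
  have h : (k + 1).val ≡ k.val + 1 [MOD N] := by
    rw [← ZMod.natCast_eq_natCast_iff]; simp
  have h2 : 2 * (k + 1).val ≡ 2 * (k.val + 1) [MOD N] := h.mul_left 2
  have h3 : ∀ n, q ^ n = q ^ (n % N) := fun n => by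
    conv_lhs => rw [← Nat.div_add_mod n N, pow_add, pow_mul, hq, one_pow, one_mul]
  rw [h3, h2, ← h3]; ring

lemma A0_A1 {q : ℂ} (hq : q ^ N = 1) : A0 N q * A1 N = q ^ 2 • (A1 N * A0 N q) := by
  ext j k
  rw [A0, Matrix.diagonal_mul, Matrix.smul_apply, Matrix.mul_diagonal]
  simp only [A1]
  split_ifs with h
  · subst h; rw [qpow_val hq]; simp
  · simp

lemma A0_pow {q : ℂ} (hq : q ^ N = 1) : A0 N q ^ N = 1 := by
  rw [A0, Matrix.diagonal_pow, ← Matrix.diagonal_one]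
  congr 1
  ext k
  simp only [Pi.pow_apply]
  rw [← pow_mul, mul_comm, pow_mul, hq, one_pow]

lemma A1_pow_apply (n : ℕ) (j k : ZMod N) :
    (A1 N ^ n) j k = if j = k + n then 1 else 0 := by
  induction n generalizing j k with
  | zero => simp [Matrix.one_apply]
  | succ n ih =>
    rw [pow_succ, Matrix.mul_apply]
    simp only [ih, A1]
    simp only [mul_ite, mul_one, mul_zero]
    rw [Finset.sum_ite_eq']
    simp [add_assoc, add_comm (1 : ZMod N)]

lemma A1_pow : A1 N ^ N = 1 := by
  ext j k
  rw [A1_pow_apply]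
  simp [Matrix.one_apply]

lemma A2_A0 {q : ℂ} (hq0 : q ≠ 0) : A2 N q * A0 N q * A1 N = q • 1 := by
  ext j k
  rw [Matrix.mul_apply]
  simp only [A0, Matrix.mul_diagonal, A1, A2]
  simp only [mul_ite, mul_one, mul_zero]
  rw [Finset.sum_ite_eq']
  have h : q ^ ((1 : ℤ) - 2 * ((k + 1).val : ℤ)) * q ^ (2 * (k + 1).val) = q := by
    rw [← zpow_natCast, ← zpow_add₀ hq0]
    simp
  simp only [add_sub_cancel_right, Matrix.smul_apply, Matrix.one_apply, Finset.mem_univ, if_true]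
  split_ifs with h1
  · rw [h]; simp
  · simp

lemma isUnit_of_pow {m : Matrix (ZMod N) (ZMod N) ℂ} (h : m ^ N = 1) : IsUnit m.det := by
  rw [← Matrix.isUnit_iff_isUnit_det]
  exact IsUnit.of_pow_eq_one h (NeZero.ne N)

lemma kron_pow (a c : Matrix (ZMod N) (ZMod N) ℂ) (n : ℕ) : (a ⊗ₖ c) ^ n = (a ^ n) ⊗ₖ (c ^ n) := by
  induction n with
  | zero => simp
  | succ n ih => rw [pow_succ, ih, ← Matrix.mul_kronecker_mul, pow_succ, pow_succ]

/-- power of a product of `q`-commuting elements -/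
lemma qcomm_pow {A : Type*} [Ring A] [Algebra ℂ A] {a b : A} {z : ℂ}
    (h : a * b = z • (b * a)) (n : ℕ) :
    (b * a) ^ n = z ^ (n * (n - 1) / 2) • (b ^ n * a ^ n) := by
  have h1 : ∀ n : ℕ, a ^ n * b = z ^ n • (b * a ^ n) := by
    intro n
    induction n with
    | zero => simp
    | succ n ih =>
      rw [pow_succ, mul_assoc, h, mul_smul_comm, ← mul_assoc, ih, smul_mul_assoc, smul_smul,
        mul_assoc, pow_succ, mul_comm]
  induction n with
  | zero => simp
  | succ n ih =>
    have e : (n + 1) * (n + 1 - 1) / 2 = n * (n - 1) / 2 + n := by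
      rw [← Finset.sum_range_id_mul_two, ← Finset.sum_range_id_mul_two]
      simp [Finset.sum_range_succ]
    rw [pow_succ, ih, e, smul_mul_assoc, mul_assoc, ← mul_assoc (a ^ n), h1, smul_mul_assoc,
      mul_smul_comm, smul_smul, pow_add, pow_succ b, pow_succ a]
    simp only [mul_assoc]

lemma qcomm_pow_one {A : Type*} [Ring A] [Algebra ℂ A] {a b : A} {z : ℂ} (hodd : Odd N)
    (hz : z ^ N = 1) (h : a * b = z • (b * a)) (ha : a ^ N = 1) (hb : b ^ N = 1) :
    (b * a) ^ N = 1 := by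
  obtain ⟨m, hm⟩ := hodd
  have e : N * (N - 1) / 2 = N * m := by
    have : N - 1 = 2 * m := by omega
    rw [this]
    rw [show N * (2 * m) = 2 * (N * m) by ring]
    simp
  rw [qcomm_pow h, ha, hb, e, pow_mul, hz]
  simp

end mats

section core

variable {A : Type*} [Ring A] [Algebra ℂ A]

lemma core_a {u p p2 U V x : A} {q w₀ w₂ c c₀ a₀ : ℂ} (hq0 : q ≠ 0) (hw : w₂ = -q * c)
    (h1 : u * V = (-q⁻¹) • (U * u)) (hUp : U * p = p * U)
    (hf : w₀⁻¹ • p2 = (1 + (q⁻¹ * w₂) • U) * p)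
    (hux : u * x = x * u) (hpx : p2 * x = x * p) (ha₀ : a₀ = w₀⁻¹ * c₀) :
    (p * u) * (1 + (q * c) • V) * (c₀ • x) = (a₀ • x) * (p * u) := by
  have e1 : (p * u) * (1 + (q * c) • V) = (w₀⁻¹ • p2) * u := by
    rw [hf, mul_add, mul_one, mul_smul_comm, mul_assoc, h1, add_mul, add_mul, one_mul]
    rw [mul_smul_comm, smul_smul, ← mul_assoc, ← hUp, smul_mul_assoc, smul_mul_assoc]
    congr 2
    rw [hw]; field_simp
  rw [e1, mul_smul_comm, mul_assoc, hux, smul_mul_assoc, ← mul_assoc, hpx, smul_smul,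
    smul_mul_assoc, ha₀, mul_assoc, mul_comm c₀]

lemma core_b {u p p2 U Uinv y t W : A} {q w₀ w₁ w₂ e d₁ a₁ : ℂ} (hq0 : q ≠ 0)
    (hw₀ : w₀ ≠ 0) (hw₁ : w₁ ≠ 0) (hw₂ : w₂ ≠ 0) (htetra : w₀ * w₁ * w₂ = -q)
    (hU : Uinv * U = 1) (hUp : Uinv * p2 = p2 * Uinv) (he : e = -q * w₂⁻¹)
    (hf : w₀⁻¹ • p2 = (1 + (q⁻¹ * w₂) • U) * p) (hW : W = (-q) • Uinv)
    (hut : u * t = -(y * Uinv * u)) (hpy : p * y = y * p2) (hy : Uinv * y = (q ^ 2)⁻¹ • (y * Uinv))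
    (ha₁ : a₁ = w₁⁻¹ * d₁) :
    (p * u) * (d₁ • t) = (1 + (q * e) • W) * (a₁ • y) * (p * u) := by
  have e1 : (1 + (q * e) • W) * y = (q * w₂⁻¹) • (y * (Uinv * (1 + (q⁻¹ * w₂) • U))) := by
    rw [mul_add, mul_smul_comm, hU, mul_one, add_mul, one_mul, hW, smul_smul, smul_mul_assoc, hy,
      smul_smul, mul_add, mul_smul_comm, mul_one, smul_add, smul_smul, add_comm]
    congr 1
    · congr 1
      rw [he]; field_simp
    · rw [show q * w₂⁻¹ * (q⁻¹ * w₂) = 1 by field_simp, one_smul]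
  rw [mul_smul_comm, mul_smul_comm a₁, e1, smul_smul, smul_mul_assoc]
  have e2 : y * (Uinv * (1 + (q⁻¹ * w₂) • U)) * (p * u) = w₀⁻¹ • (y * (p2 * (Uinv * u))) := by
    calc _ = y * (Uinv * ((1 + (q⁻¹ * w₂) • U) * p)) * u := by simp only [mul_assoc]
      _ = _ := by
        rw [← hf, mul_smul_comm, mul_smul_comm, smul_mul_assoc, hUp]
        simp only [mul_assoc]
  have e3 : p * (y * Uinv * u) = y * (p2 * (Uinv * u)) := by
    rw [mul_assoc y, ← mul_assoc p, hpy, mul_assoc]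
  rw [e2, smul_smul, mul_assoc p u t, hut, mul_neg, e3, smul_neg, ← neg_smul]
  congr 1
  rw [ha₁]
  field_simp
  linear_combination -d₁ * htetra

end core

/-- The transposed basic matrix dilogarithm intertwines standard local representations of
the Chekhov–Fock algebras of the two triangulations of an ideal square related by a
diagonal exchange. -/
theorem Ldil_intertwines (N : ℕ) [NeZero N] (hN : 3 ≤ N) (hNodd : Odd N)
    (q : ℂ) (hq : IsPrimitiveRoot q N)
    (c₀ c₁ c₂ d₀ d₁ d₂ : ℂ) (hc₀ : c₀ ≠ 0) (hc₁ : c₁ ≠ 0) (hc₂ : c₂ ≠ 0)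
    (hd₀ : d₀ ≠ 0) (hd₁ : d₁ ≠ 0) (hd₂ : d₂ ≠ 0)
    (w₀ w₁ w₂ : ℂ) (hw₂def : w₂ = -q * (c₁ * d₀))
    (hw₀ : w₀ ≠ 0) (hw₁ : w₁ ≠ 0) (htetra : w₀ * w₁ * w₂ = -q)
    (hshape : w₂ ^ N = 1 - (w₀⁻¹) ^ N)
    (a₂ b₁ : ℂ) (ha₂ : a₂ ≠ 0) (hb₁ : b₁ ≠ 0) (ha₂b₁ : a₂ * b₁ = -q * w₂⁻¹)
    (a₀ a₁ b₀ b₂ : ℂ) (ha₀ : a₀ = w₀⁻¹ * c₀) (ha₁ : a₁ = w₁⁻¹ * d₁)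
    (hb₀ : b₀ = w₁⁻¹ * c₂) (hb₂ : b₂ = w₀⁻¹ * d₂) :
    Ldil N q w₀ w₂ * ((c₁ * d₀) • (A1 N ⊗ₖ A0 N q))⁻¹ =
        ((a₂ * b₁) • (A2 N q ⊗ₖ A1 N)) * Ldil N q w₀ w₂ ∧
    Ldil N q w₀ w₂ * (1 + (q * (c₁ * d₀)) • (A1 N ⊗ₖ A0 N q)) *
          (c₀ • (A0 N q ⊗ₖ (1 : Matrix (ZMod N) (ZMod N) ℂ))) =
        (a₀ • (A0 N q ⊗ₖ (1 : Matrix (ZMod N) (ZMod N) ℂ))) * Ldil N q w₀ w₂ ∧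
    Ldil N q w₀ w₂ * (1 + (q * (c₁ * d₀)) • (A1 N ⊗ₖ A0 N q)) *
          (d₂ • ((1 : Matrix (ZMod N) (ZMod N) ℂ) ⊗ₖ A2 N q)) =
        (b₂ • ((1 : Matrix (ZMod N) (ZMod N) ℂ) ⊗ₖ A2 N q)) * Ldil N q w₀ w₂ ∧
    Ldil N q w₀ w₂ * (d₁ • ((1 : Matrix (ZMod N) (ZMod N) ℂ) ⊗ₖ A1 N)) =
        (1 + (q * (a₂ * b₁)) • (A2 N q ⊗ₖ A1 N)) *
          (a₁ • (A1 N ⊗ₖ (1 : Matrix (ZMod N) (ZMod N) ℂ))) * Ldil N q w₀ w₂ ∧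
    Ldil N q w₀ w₂ * (c₂ • (A2 N q ⊗ₖ (1 : Matrix (ZMod N) (ZMod N) ℂ))) =
        (1 + (q * (a₂ * b₁)) • (A2 N q ⊗ₖ A1 N)) *
          (b₀ • ((1 : Matrix (ZMod N) (ZMod N) ℂ) ⊗ₖ A0 N q)) * Ldil N q w₀ w₂ := by
  classical
  have hqN : q ^ N = 1 := hq.pow_eq_one
  have hq0 : q ≠ 0 := hq.ne_zero (NeZero.ne N)
  have hq2 : IsPrimitiveRoot (q ^ 2) N := hq.pow_of_coprime 2 (Nat.coprime_two_left.mpr hNodd)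
  have hw₂ : w₂ ≠ 0 := by
    rw [hw₂def]; exact mul_ne_zero (neg_ne_zero.mpr hq0) (mul_ne_zero hc₁ hd₀)
  have hab := A0_A1 (N := N) hqN
  have haN := A0_pow (N := N) hqN
  have hbN := A1_pow (N := N)
  have hA2 := A2_A0 (N := N) hq0
  have ua := isUnit_of_pow haN
  have ub := isUnit_of_pow hbN
  have hPsiDef : Ldil N q w₀ w₂ =
    Psi N q w₀ w₂ (-((A0 N q * A1 N) ⊗ₖ (A1 N)⁻¹)) * Ups N q := rfl
  rw [hPsiDef]
  have aainv := Matrix.mul_nonsing_inv _ ua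
  have ainva := Matrix.nonsing_inv_mul _ ua
  have bbinv := Matrix.mul_nonsing_inv _ ub
  have binvb := Matrix.nonsing_inv_mul _ ub
  have hUps : Ups N q = (N : ℂ)⁻¹ • FF N (q ^ 2)⁻¹ (A0 N q ⊗ₖ (1 : Matrix (ZMod N) (ZMod N) ℂ))
      (q⁻¹ • ((1 : Matrix (ZMod N) (ZMod N) ℂ) ⊗ₖ ((A0 N q)⁻¹ * (A1 N)⁻¹))) := by
    unfold Ups FF
    congr 1
    refine Finset.sum_congr rfl fun i _ => Finset.sum_congr rfl fun j _ => ?_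
    rw [smul_pow, kron_pow, kron_pow, mul_smul_comm, ← Matrix.mul_kronecker_mul, one_pow, one_pow,
      one_mul, mul_one, smul_smul, Matrix.mul_inv_rev]
    congr 1
    rw [zpow_neg, zpow_add₀ hq0, mul_inv]
    congr 1
    · rw [inv_pow, ← pow_mul, ← zpow_natCast]; push_cast; ring_nf
    · rw [zpow_natCast, inv_pow]
  have hQN : (A0 N q * A1 N) ^ N = 1 := by
    have := qcomm_pow_one (N := N) (a := A0 N q) (b := A1 N) hNodd hq2.pow_eq_one hab haN hbN
    rw [hab, smul_pow, this, hq2.pow_eq_one, one_smul]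
  have hQNinv : (A1 N * A0 N q) ^ N = 1 :=
    qcomm_pow_one (N := N) (a := A0 N q) (b := A1 N) hNodd hq2.pow_eq_one hab haN hbN
  have hA2inv : A2 N q = q • ((A1 N)⁻¹ * (A0 N q)⁻¹) := by
    have : A2 N q * A0 N q * A1 N * ((A1 N)⁻¹ * (A0 N q)⁻¹) = A2 N q := by
      rw [mul_assoc, ← mul_assoc (A1 N), bbinv, one_mul, mul_assoc, aainv, mul_one]
    rw [← this, hA2, smul_mul_assoc, one_mul]
  rw [hA2inv]
  have inv_pow_one : ∀ m : Matrix (ZMod N) (ZMod N) ℂ, m ^ N = 1 → m⁻¹ ^ N = 1 := by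
    intro m hm
    rw [Matrix.inv_pow', hm, inv_one]
  have hbinvN := inv_pow_one _ hbN
  have hQi : ((A0 N q)⁻¹ * (A1 N)⁻¹) ^ N = 1 := by
    rw [← Matrix.mul_inv_rev]; exact inv_pow_one _ hQNinv
  clear hA2 hA2inv hPsiDef hQNinv
  generalize hUpsd : Ups N q = u at *
  generalize A0 N q = a at *
  generalize A1 N = b at *
  generalize a⁻¹ = ainv at *
  generalize b⁻¹ = binv at *
  have abinv : a * binv = (q ^ 2)⁻¹ • (binv * a) := by
    have : binv * (a * b) * binv = binv * (q ^ 2 • (b * a)) * binv := by rw [hab]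
    rw [mul_assoc, mul_assoc a, bbinv, mul_one, mul_smul_comm, ← mul_assoc binv, binvb, one_mul,
      smul_mul_assoc] at this
    rw [this, smul_smul, inv_mul_cancel₀ (pow_ne_zero 2 hq0), one_smul]
  have ainvb : ainv * b = (q ^ 2)⁻¹ • (b * ainv) := by
    have : ainv * (a * b) * ainv = ainv * (q ^ 2 • (b * a)) * ainv := by rw [hab]
    rw [← mul_assoc ainv, ainva, one_mul, mul_smul_comm, ← mul_assoc ainv, smul_mul_assoc,
      mul_assoc (ainv * b), aainv, mul_one] at this
    rw [this, smul_smul, inv_mul_cancel₀ (pow_ne_zero 2 hq0), one_smul]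
  have ainvbinv : ainv * binv = (q ^ 2) • (binv * ainv) := by
    have : ainv * (a * binv) * ainv = ainv * ((q ^ 2)⁻¹ • (binv * a)) * ainv := by rw [abinv]
    rw [← mul_assoc ainv, ainva, one_mul, mul_smul_comm, ← mul_assoc ainv, smul_mul_assoc,
      mul_assoc (ainv * binv), aainv, mul_one] at this
    rw [this, smul_smul, mul_inv_cancel₀ (pow_ne_zero 2 hq0), one_smul]
  have ext1 : ∀ {l r m : Matrix (ZMod N) (ZMod N) ℂ} {z : ℂ} , l * r = z • m →
      ∀ w, l * (r * w) = z • (m * w) := by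
    intro l r m z h w; rw [← mul_assoc, h, smul_mul_assoc]
  have ext2 : ∀ {l r : Matrix (ZMod N) (ZMod N) ℂ}, l * r = 1 → ∀ w, l * (r * w) = w := by
    intro l r h w; rw [← mul_assoc, h, one_mul]
  have hab2 := ext1 hab
  have abinv2 := ext1 abinv
  have ainvb2 := ext1 ainvb
  have ainvbinv2 := ext1 ainvbinv
  have aainv2 := ext2 aainv
  have ainva2 := ext2 ainva
  have bbinv2 := ext2 bbinv
  have binvb2 := ext2 binvb
  set U := -((a * b) ⊗ₖ binv) with hU
  set x := a ⊗ₖ (1 : Matrix (ZMod N) (ZMod N) ℂ) with hx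
  set Q := q⁻¹ • ((1 : Matrix (ZMod N) (ZMod N) ℂ) ⊗ₖ (ainv * binv)) with hQ
  have hUN : U ^ N = -1 := by
    rw [hU, hNodd.neg_pow, kron_pow, hQN, hbinvN, Matrix.one_kronecker_one]
  have hxN : x ^ N = 1 := by
    rw [hx, kron_pow, haN, one_pow, Matrix.one_kronecker_one]
  have hQN : Q ^ N = 1 := by
    rw [hQ, smul_pow, kron_pow, hQi, one_pow, inv_pow, hqN, inv_one, one_smul,
      Matrix.one_kronecker_one]
  have hr : ((q ^ 2)⁻¹) ^ N = 1 := by rw [inv_pow, hq2.pow_eq_one, inv_one]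
  have hxQ : x * Q = Q * x := by
    simp only [hx, hQ, mul_smul_comm, smul_mul_assoc, ← Matrix.mul_kronecker_mul, mul_one, one_mul]
  have hf := psi_func N q w₀ w₂ hq2 hqN hNodd hw₂ hshape U hUN
  set p := Psi N q w₀ w₂ U with hp
  set p2 := Psi N q w₀ w₂ (q ^ 2 • U) with hp2
  set Uinv := -((binv * ainv) ⊗ₖ b) with hUinv
  have hUUinv : U * Uinv = 1 := by
    simp only [hU, hUinv, neg_mul_neg, ← Matrix.mul_kronecker_mul, mul_assoc, bbinv2, aainv, binvb,
      Matrix.one_kronecker_one]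
  have hUinvU : Uinv * U = 1 := by
    simp only [hU, hUinv, neg_mul_neg, ← Matrix.mul_kronecker_mul, mul_assoc, ainva2, bbinv, binvb,
      Matrix.one_kronecker_one]
  have hUp : U * p = p * U := (psi_semiconj N q w₀ w₂ (rfl : U * U = U * U)).symm
  have hUinvp2 : Uinv * p2 = p2 * Uinv := by
    refine (psi_semiconj N q w₀ w₂ ?_).symm
    rw [smul_mul_assoc, mul_smul_comm, hUUinv, hUinvU]
  set y := b ⊗ₖ (1 : Matrix (ZMod N) (ZMod N) ℂ) with hy
  set s := (1 : Matrix (ZMod N) (ZMod N) ℂ) ⊗ₖ a with hs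
  set t := (1 : Matrix (ZMod N) (ZMod N) ℂ) ⊗ₖ b with ht
  set v := FF N (q ^ 2)⁻¹ x Q with hv
  have hvx : v * x = x * v := FF_semiconj N _ rfl hxQ.symm
  have hvQ : v * Q = Q * v := FF_semiconj N _ hxQ rfl
  have hvt : v * t * x = t * v := by
    have h1 : FF N (q ^ 2)⁻¹ x Q * t = t * FF N (q ^ 2)⁻¹ x ((q ^ 2)⁻¹ • Q) := by
      refine FF_semiconj N _ ?_ ?_
      · simp only [hx, ht, ← Matrix.mul_kronecker_mul, mul_one, one_mul]
      · simp only [hQ, ht, mul_smul_comm, smul_mul_assoc, ← Matrix.mul_kronecker_mul, mul_one,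
          one_mul, mul_assoc, hab, abinv, ainvb, ainvbinv, hab2, abinv2, ainvb2, ainvbinv2,
          aainv, ainva, bbinv, binvb, aainv2, ainva2, bbinv2, binvb2, Matrix.kronecker_smul, Matrix.smul_kronecker,
          smul_smul]
        congr 1
        field_simp
    rw [h1, mul_assoc, FF_right N _ hr hxN hxQ]
  have hvs : v * s = s * v * x := by
    have h1 : FF N (q ^ 2)⁻¹ x ((q ^ 2)⁻¹ • Q) * s = s * FF N (q ^ 2)⁻¹ x Q := by
      refine FF_semiconj N _ ?_ ?_
      · simp only [hx, hs, ← Matrix.mul_kronecker_mul, mul_one, one_mul]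
      · simp only [hQ, hs, mul_smul_comm, smul_mul_assoc, ← Matrix.mul_kronecker_mul, mul_one,
          one_mul, mul_assoc, hab, abinv, ainvb, ainvbinv, hab2, abinv2, ainvb2, ainvbinv2,
          aainv, ainva, bbinv, binvb, aainv2, ainva2, bbinv2, binvb2, Matrix.kronecker_smul, Matrix.smul_kronecker,
          smul_smul]
        congr 1
        field_simp
    rw [hv, ← FF_right N _ hr hxN hxQ, FF_right N _ hr hxN hxQ, ← h1,
      ← FF_right N _ hr hxN hxQ, mul_assoc, mul_assoc]
    congr 1
    simp only [hx, hs, ← Matrix.mul_kronecker_mul, mul_one, one_mul]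
  have hvy : v * y = y * v * Q := by
    have h1 : FF N (q ^ 2)⁻¹ ((q ^ 2)⁻¹ • x) Q * y = y * FF N (q ^ 2)⁻¹ x Q := by
      refine FF_semiconj N _ ?_ ?_
      · simp only [hx, hy, mul_smul_comm, smul_mul_assoc, ← Matrix.mul_kronecker_mul, mul_one,
          hab, Matrix.smul_kronecker, smul_smul]
        rw [inv_mul_cancel₀ (pow_ne_zero 2 hq0), one_smul]
      · simp only [hQ, hy, mul_smul_comm, smul_mul_assoc, ← Matrix.mul_kronecker_mul, mul_one,
          one_mul]
    have h2 := FF_left N (q ^ 2)⁻¹ hr (P := x) hQN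
    have h3 : Q * y = y * Q := by
      simp only [hQ, hy, mul_smul_comm, smul_mul_assoc, ← Matrix.mul_kronecker_mul, mul_one,
          one_mul]
    calc v * y = FF N (q ^ 2)⁻¹ ((q ^ 2)⁻¹ • x) Q * Q * y := by rw [h2]
      _ = _ := by rw [mul_assoc, h3, ← mul_assoc, h1]
  set xinv := ainv ⊗ₖ (1 : Matrix (ZMod N) (ZMod N) ℂ) with hxinv
  have xxinv : x * xinv = 1 := by
    rw [hx, hxinv, ← Matrix.mul_kronecker_mul, aainv, one_mul, Matrix.one_kronecker_one]
  have xinvx : xinv * x = 1 := by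
    rw [hx, hxinv, ← Matrix.mul_kronecker_mul, ainva, one_mul, Matrix.one_kronecker_one]
  have hvxinv : v * xinv = xinv * v := by
    calc v * xinv = xinv * x * v * xinv := by rw [xinvx, one_mul]
      _ = xinv * v * (x * xinv) := by rw [mul_assoc xinv, ← hvx]; simp only [mul_assoc]
      _ = _ := by rw [xxinv, mul_one]
  have hvV : v * (b ⊗ₖ a) = (-q⁻¹) • (U * v) := by
    have e1 : b ⊗ₖ a = y * s := by rw [hy, hs, ← Matrix.mul_kronecker_mul, mul_one, one_mul]
    have e2 : y * Q * s * x = (-q⁻¹) • U := by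
      simp only [hy, hQ, hs, hx, hU, mul_smul_comm, smul_mul_assoc, smul_add, ← Matrix.mul_kronecker_mul, mul_one, one_mul, mul_assoc,
      mul_neg, neg_mul, smul_neg, neg_neg, neg_smul, hab, abinv, ainvb, ainvbinv, hab2, abinv2, ainvb2, ainvbinv2,
          aainv, ainva, bbinv, binvb, aainv2, ainva2, bbinv2, binvb2, Matrix.kronecker_smul, Matrix.smul_kronecker,
          smul_smul]
      all_goals first | done | (congr 1; field_simp) | (congr 2; field_simp) | (field_simp; simp)
    calc v * (b ⊗ₖ a) = v * y * s := by rw [e1, mul_assoc]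
      _ = y * Q * (v * s) := by rw [hvy, mul_assoc y, hvQ]; simp only [mul_assoc]
      _ = y * Q * s * x * v := by rw [hvs, mul_assoc s, hvx]; simp only [mul_assoc]
      _ = _ := by rw [e2, smul_mul_assoc]
  have hvt2 : v * t = -(y * Uinv * v) := by
    have e1 : t * xinv = -(y * Uinv) := by
      simp only [ht, hxinv, hy, hUinv, mul_smul_comm, smul_mul_assoc, smul_add, ← Matrix.mul_kronecker_mul, mul_one, one_mul, mul_assoc,
      mul_neg, neg_mul, smul_neg, neg_neg, neg_smul, hab, abinv, ainvb, ainvbinv, hab2, abinv2, ainvb2, ainvbinv2,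
          aainv, ainva, bbinv, binvb, aainv2, ainva2, bbinv2, binvb2, Matrix.kronecker_smul, Matrix.smul_kronecker,
          smul_smul]
    calc v * t = v * t * x * xinv := by rw [mul_assoc (v * t), xxinv, mul_one]
      _ = t * xinv * v := by rw [hvt, mul_assoc, hvxinv, mul_assoc]
      _ = _ := by rw [e1, neg_mul]
  have hvT : v * ((q • (binv * ainv)) ⊗ₖ (1 : Matrix (ZMod N) (ZMod N) ℂ)) = -(s * Uinv * v) := by
    set yinv := binv ⊗ₖ (1 : Matrix (ZMod N) (ZMod N) ℂ) with hyinv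
    set Qinv := q • ((1 : Matrix (ZMod N) (ZMod N) ℂ) ⊗ₖ (b * a)) with hQinv
    have yyinv : y * yinv = 1 := by
      rw [hy, hyinv, ← Matrix.mul_kronecker_mul, bbinv, one_mul, Matrix.one_kronecker_one]
    have yinvy : yinv * y = 1 := by
      rw [hy, hyinv, ← Matrix.mul_kronecker_mul, binvb, one_mul, Matrix.one_kronecker_one]
    have QinvQ : Qinv * Q = 1 := by
      rw [hQ, hQinv, smul_mul_smul_comm, mul_inv_cancel₀ hq0, one_smul, ← Matrix.mul_kronecker_mul,
        one_mul, mul_assoc b, aainv2, bbinv, Matrix.one_kronecker_one]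
    have e0 : v * yinv = Qinv * yinv * v := by
      have e : yinv * v = Q * (v * yinv) := by
        calc yinv * v = yinv * (v * y) * yinv := by simp only [mul_assoc, yyinv, mul_one]
          _ = yinv * y * (v * Q * yinv) := by rw [hvy]; simp only [mul_assoc]
          _ = _ := by rw [yinvy, one_mul, hvQ, mul_assoc]
      rw [mul_assoc, e, ← mul_assoc, QinvQ, one_mul]
    have e1 : (q • (binv * ainv)) ⊗ₖ (1 : Matrix (ZMod N) (ZMod N) ℂ) = q • (yinv * xinv) := by
      rw [hyinv, hxinv, ← Matrix.mul_kronecker_mul, one_mul, Matrix.smul_kronecker]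
    have e2 : q • (Qinv * yinv * xinv) = -(s * Uinv) := by
      simp only [hQinv, hxinv, hyinv, hs, hUinv, mul_smul_comm, smul_mul_assoc, smul_add, ← Matrix.mul_kronecker_mul, mul_one, one_mul, mul_assoc,
      mul_neg, neg_mul, smul_neg, neg_neg, neg_smul, hab, abinv, ainvb, ainvbinv, hab2, abinv2, ainvb2, ainvbinv2,
          aainv, ainva, bbinv, binvb, aainv2, ainva2, bbinv2, binvb2, Matrix.kronecker_smul, Matrix.smul_kronecker,
          smul_smul]
      all_goals first | done | (congr 1; field_simp) | (congr 2; field_simp) | (field_simp; simp)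
    rw [e1, mul_smul_comm, ← mul_assoc, e0, mul_assoc _ v, hvxinv, ← mul_assoc, ← smul_mul_assoc, e2,
      neg_mul]
  have hvg : v * ((1 : Matrix (ZMod N) (ZMod N) ℂ) ⊗ₖ (q • (binv * ainv))) =
      ((1 : Matrix (ZMod N) (ZMod N) ℂ) ⊗ₖ (q • (binv * ainv))) * v := by
    have e1 : (1 : Matrix (ZMod N) (ZMod N) ℂ) ⊗ₖ (q • (binv * ainv)) = (q * (q * (q ^ 2)⁻¹)) • Q := by
      simp only [hQ, mul_smul_comm, smul_mul_assoc, smul_add, ← Matrix.mul_kronecker_mul, mul_one, one_mul, mul_assoc,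
      mul_neg, neg_mul, smul_neg, neg_neg, neg_smul, hab, abinv, ainvb, ainvbinv, hab2, abinv2, ainvb2, ainvbinv2,
          aainv, ainva, bbinv, binvb, aainv2, ainva2, bbinv2, binvb2, Matrix.kronecker_smul, Matrix.smul_kronecker,
          smul_smul]
      all_goals first | done | (congr 1; field_simp) | (congr 2; field_simp) | (field_simp; simp)
    rw [e1, mul_smul_comm, smul_mul_assoc, hvQ]
  have toU : ∀ {m n : Matrix (ZMod N × ZMod N) (ZMod N × ZMod N) ℂ}, v * m = n * v →
      u * m = n * u := by
    intro m n h
    rw [hUps, smul_mul_assoc, mul_smul_comm, h]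
  have hux : u * x = x * u := toU hvx
  have hug := toU hvg
  have huV : u * (b ⊗ₖ a) = (-q⁻¹) • (U * u) := by
    rw [← smul_mul_assoc]; apply toU; rw [smul_mul_assoc]; exact hvV
  have hut : u * t = -(y * Uinv * u) := by
    rw [← neg_mul]; apply toU; rw [neg_mul]; exact hvt2
  have huT : u * ((q • (binv * ainv)) ⊗ₖ (1 : Matrix (ZMod N) (ZMod N) ℂ)) = -(s * Uinv * u) := by
    rw [← neg_mul]; apply toU; rw [neg_mul]; exact hvT
  have hpx : p2 * x = x * p := by
    refine psi_semiconj N q w₀ w₂ ?_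
    simp only [hU, hx, mul_smul_comm, smul_mul_assoc, smul_add, ← Matrix.mul_kronecker_mul, mul_one, one_mul, mul_assoc,
      mul_neg, neg_mul, smul_neg, neg_neg, neg_smul, hab, abinv, ainvb, ainvbinv, hab2, abinv2, ainvb2, ainvbinv2,
          aainv, ainva, bbinv, binvb, aainv2, ainva2, bbinv2, binvb2, Matrix.kronecker_smul, Matrix.smul_kronecker,
          smul_smul]
    all_goals first | done | (congr 1; field_simp) | (congr 2; field_simp) | (field_simp; simp)
  have hpg : p2 * ((1 : Matrix (ZMod N) (ZMod N) ℂ) ⊗ₖ (q • (binv * ainv))) =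
      ((1 : Matrix (ZMod N) (ZMod N) ℂ) ⊗ₖ (q • (binv * ainv))) * p := by
    refine psi_semiconj N q w₀ w₂ ?_
    simp only [hU, mul_smul_comm, smul_mul_assoc, smul_add, ← Matrix.mul_kronecker_mul, mul_one, one_mul, mul_assoc,
      mul_neg, neg_mul, smul_neg, neg_neg, neg_smul, hab, abinv, ainvb, ainvbinv, hab2, abinv2, ainvb2, ainvbinv2,
          aainv, ainva, bbinv, binvb, aainv2, ainva2, bbinv2, binvb2, Matrix.kronecker_smul, Matrix.smul_kronecker,
          smul_smul]
    all_goals first | done | (congr 1; field_simp) | (congr 2; field_simp) | (field_simp; simp)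
  have hpy : p * y = y * p2 := by
    refine psi_semiconj N q w₀ w₂ ?_
    simp only [hU, hy, mul_smul_comm, smul_mul_assoc, smul_add, ← Matrix.mul_kronecker_mul, mul_one, one_mul, mul_assoc,
      mul_neg, neg_mul, smul_neg, neg_neg, neg_smul, hab, abinv, ainvb, ainvbinv, hab2, abinv2, ainvb2, ainvbinv2,
          aainv, ainva, bbinv, binvb, aainv2, ainva2, bbinv2, binvb2, Matrix.kronecker_smul, Matrix.smul_kronecker,
          smul_smul]
  have hps : p * s = s * p2 := by
    refine psi_semiconj N q w₀ w₂ ?_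
    simp only [hU, hs, mul_smul_comm, smul_mul_assoc, smul_add, ← Matrix.mul_kronecker_mul, mul_one, one_mul, mul_assoc,
      mul_neg, neg_mul, smul_neg, neg_neg, neg_smul, hab, abinv, ainvb, ainvbinv, hab2, abinv2, ainvb2, ainvbinv2,
          aainv, ainva, bbinv, binvb, aainv2, ainva2, bbinv2, binvb2, Matrix.kronecker_smul, Matrix.smul_kronecker,
          smul_smul]
    all_goals first | done | (congr 1; field_simp) | (congr 2; field_simp) | (field_simp; simp)
  have hUinvy : Uinv * y = (q ^ 2)⁻¹ • (y * Uinv) := by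
    simp only [hUinv, hy, mul_smul_comm, smul_mul_assoc, smul_add, ← Matrix.mul_kronecker_mul, mul_one, one_mul, mul_assoc,
      mul_neg, neg_mul, smul_neg, neg_neg, neg_smul, hab, abinv, ainvb, ainvbinv, hab2, abinv2, ainvb2, ainvbinv2,
          aainv, ainva, bbinv, binvb, aainv2, ainva2, bbinv2, binvb2, Matrix.kronecker_smul, Matrix.smul_kronecker,
          smul_smul]
  have hUinvs : Uinv * s = (q ^ 2)⁻¹ • (s * Uinv) := by
    simp only [hUinv, hs, mul_smul_comm, smul_mul_assoc, smul_add, ← Matrix.mul_kronecker_mul, mul_one, one_mul, mul_assoc,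
      mul_neg, neg_mul, smul_neg, neg_neg, neg_smul, hab, abinv, ainvb, ainvbinv, hab2, abinv2, ainvb2, ainvbinv2,
          aainv, ainva, bbinv, binvb, aainv2, ainva2, bbinv2, binvb2, Matrix.kronecker_smul, Matrix.smul_kronecker,
          smul_smul]
    all_goals first | done | (congr 1; field_simp) | (congr 2; field_simp) | (field_simp; simp)
    rw [one_smul]
  have hW : (q • (binv * ainv)) ⊗ₖ b = (-q) • Uinv := by
    simp only [hUinv, mul_smul_comm, smul_mul_assoc, smul_add, ← Matrix.mul_kronecker_mul, mul_one, one_mul, mul_assoc,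
      mul_neg, neg_mul, smul_neg, neg_neg, neg_smul, hab, abinv, ainvb, ainvbinv, hab2, abinv2, ainvb2, ainvbinv2,
          aainv, ainva, bbinv, binvb, aainv2, ainva2, bbinv2, binvb2, Matrix.kronecker_smul, Matrix.smul_kronecker,
          smul_smul]
  refine ⟨?_, core_a hq0 hw₂def huV hUp hf hux hpx ha₀, core_a hq0 hw₂def huV hUp hf hug hpg hb₂,
    core_b hq0 hw₀ hw₁ hw₂ htetra hUinvU hUinvp2 ha₂b₁ hf hW hut hpy hUinvy ha₁,
    core_b hq0 hw₀ hw₁ hw₂ htetra hUinvU hUinvp2 ha₂b₁ hf hW huT hps hUinvs hb₀⟩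
  have hc : c₁ * d₀ ≠ 0 := mul_ne_zero hc₁ hd₀
  have VVinv : (b ⊗ₖ a) * (binv ⊗ₖ ainv) = 1 := by
    rw [← Matrix.mul_kronecker_mul, aainv, bbinv, Matrix.one_kronecker_one]
  have hinv : ((c₁ * d₀) • (b ⊗ₖ a))⁻¹ = (c₁ * d₀)⁻¹ • (binv ⊗ₖ ainv) := by
    apply Matrix.inv_eq_right_inv
    rw [smul_mul_smul_comm, VVinv, mul_inv_cancel₀ hc, one_smul]
  have e1 : Uinv * (p * u) = (-q⁻¹) • (p * u * (binv ⊗ₖ ainv)) := by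
    calc Uinv * (p * u) = Uinv * (p * (u * (b ⊗ₖ a))) * (binv ⊗ₖ ainv) := by
          simp only [mul_assoc, VVinv, mul_one]
      _ = (-q⁻¹) • (Uinv * (p * U) * u * (binv ⊗ₖ ainv)) := by
          rw [huV]; simp only [mul_smul_comm, smul_mul_assoc, mul_assoc]
      _ = _ := by rw [← hUp, ← mul_assoc Uinv, hUinvU, one_mul]
  rw [hinv, hW, smul_smul, smul_mul_assoc, e1, smul_smul, mul_smul_comm]
  congr 1
  rw [ha₂b₁, hw₂def]
  field_simp
end

section
/- The operator Υ satisfies (A₁A₀ ⊗ A₁^{−1}) ∘ Υ = q^{−1} · Υ ∘ (A₁ ⊗ A₀) in End(ℂ^N ⊗ ℂ^N). -/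
open Finset Kronecker

lemma aux_qpow_mod {N : ℕ} {q : ℂ} (hq : q ^ N = 1) (m : ℕ) : q ^ (m % N) = q ^ m := by
  conv_rhs => rw [← Nat.mod_add_div m N]
  rw [pow_add, pow_mul, hq, one_pow, mul_one]

lemma aux_comm (N : ℕ) [NeZero N] (q : ℂ) (hq : q ^ N = 1) :
    A0 N q * A1 N = q ^ 2 • (A1 N * A0 N q) := by
  ext j k
  simp only [A0, Matrix.diagonal_mul, Matrix.smul_apply, Matrix.mul_diagonal, A1, smul_eq_mul]
  split_ifs with h
  · subst h
    have h1 : q ^ (k + 1).val = q ^ k.val * q := by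
      rw [ZMod.val_add, aux_qpow_mod hq, pow_add]
      congr 1
      rw [ZMod.val_one_eq_one_mod, aux_qpow_mod hq, pow_one]
    rw [mul_comm 2, pow_mul, h1, mul_comm 2, pow_mul]
    ring
  · simp

lemma aux_A0_pow (N : ℕ) [NeZero N] (q : ℂ) (hq : q ^ N = 1) : A0 N q ^ N = 1 := by
  rw [A0, Matrix.diagonal_pow, ← Matrix.diagonal_one]
  congr 1
  ext k
  simp only [Pi.pow_apply]
  rw [← pow_mul, mul_comm, pow_mul, hq, one_pow]

lemma aux_A1_pow (N : ℕ) [NeZero N] (n : ℕ) (j k : ZMod N) :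
    (A1 N ^ n) j k = if j = k + n then 1 else 0 := by
  induction n generalizing j k with
  | zero => simp [Matrix.one_apply]
  | succ n ih =>
    rw [pow_succ, Matrix.mul_apply]
    simp only [ih, A1, mul_ite, mul_one, mul_zero, Finset.sum_ite_eq',
      Finset.mem_univ, if_true]
    push_cast
    rw [add_right_comm, add_assoc]

lemma aux_A1_powN (N : ℕ) [NeZero N] : A1 N ^ N = 1 := by
  ext j k
  rw [aux_A1_pow]
  simp [Matrix.one_apply]

lemma aux_pow_comm {R : Type*} [Ring R] [Algebra ℂ R] (a b : R) (c : ℂ)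
    (h : a * b = c • (b * a)) (n : ℕ) : a ^ n * b = c ^ n • (b * a ^ n) := by
  induction n with
  | zero => simp
  | succ n ih =>
    rw [pow_succ, mul_assoc, h, mul_smul_comm, ← mul_assoc, ih, smul_mul_assoc, smul_smul,
      mul_assoc, ← pow_succ']

lemma aux_C_pow {R : Type*} [Ring R] [Algebra ℂ R] (a b : R) (q : ℂ)
    (h : a * b = q ^ 2 • (b * a)) (n : ℕ) :
    q ^ n • (b * a) ^ n = q ^ (n * n) • (b ^ n * a ^ n) := by
  induction n with
  | zero => simp
  | succ n ih =>
    have h2 := aux_pow_comm a b _ h n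
    calc q ^ (n+1) • (b * a) ^ (n+1) = q • ((q ^ n • (b * a) ^ n) * (b * a)) := by
          rw [smul_mul_assoc, smul_smul, ← pow_succ, ← pow_succ']
      _ = (q * q ^ (n*n)) • (b ^ n * (a ^ n * b) * a) := by
          rw [ih, smul_mul_assoc, smul_smul]; simp only [mul_assoc]
      _ = _ := by
          rw [h2, mul_smul_comm, smul_mul_assoc, smul_smul]
          congr 1
          · ring
          · rw [← mul_assoc, ← pow_succ, mul_assoc, ← pow_succ]

lemma aux_shift {M : Type*} [AddCommGroup M] (F : ℕ → M) (N : ℕ) (h : F N = F 0) :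
    ∑ i ∈ Finset.range N, F (i+1) = ∑ i ∈ Finset.range N, F i := by
  have := Finset.sum_range_succ F N
  rw [Finset.sum_range_succ', h] at this
  exact add_right_cancel this

/-- `(A₁A₀ ⊗ A₁⁻¹) ∘ Υ = q⁻¹ · Υ ∘ (A₁ ⊗ A₀)`. -/
theorem Ups_commutation (N : ℕ) [NeZero N] (hN : 3 ≤ N) (hNodd : Odd N)
    (q : ℂ) (hq : IsPrimitiveRoot q N) :
    ((A1 N * A0 N q) ⊗ₖ (A1 N)⁻¹) * Ups N q =
      q⁻¹ • (Ups N q * (A1 N ⊗ₖ A0 N q)) := by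
  have hN0 : N ≠ 0 := NeZero.ne N
  have hqN := hq.pow_eq_one
  have hq0 : q ≠ 0 := hq.ne_zero hN0
  have hab := aux_comm N q hqN
  have haN := aux_A0_pow N q hqN
  have hbN := aux_A1_powN N
  unfold Ups
  generalize A0 N q = a at *
  generalize A1 N = b at *
  have hCN : (b * a) ^ N = 1 := by
    have := aux_C_pow a b q hab N
    rwa [pow_mul, hqN, one_pow, one_smul, one_smul, haN, hbN, one_mul] at this
  have hDN : (b * a)⁻¹ ^ N = 1 := by rw [Matrix.inv_pow', hCN, inv_one]
  have hub : IsUnit b.det := (Matrix.isUnit_iff_isUnit_det b).1 (IsUnit.of_pow_eq_one hbN hN0)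
  have hua : IsUnit a.det := (Matrix.isUnit_iff_isUnit_det a).1 (IsUnit.of_pow_eq_one haN hN0)
  have hDdef : (b * a)⁻¹ = a⁻¹ * b⁻¹ := Matrix.mul_inv_rev b a
  have h1 : b⁻¹ * a = q ^ 2 • (a * b⁻¹) := by
    calc b⁻¹ * a = b⁻¹ * (a * b) * b⁻¹ := by
          rw [mul_assoc, mul_assoc, Matrix.mul_nonsing_inv _ hub, mul_one]
      _ = _ := by
          rw [hab, mul_smul_comm, smul_mul_assoc, ← mul_assoc, Matrix.nonsing_inv_mul _ hub,
            one_mul]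
  have hDa : (b * a)⁻¹ * a = q ^ 2 • b⁻¹ := by
    rw [hDdef, mul_assoc, h1, mul_smul_comm, ← mul_assoc, Matrix.nonsing_inv_mul _ hua, one_mul]
  have hDb : (b * a)⁻¹ * b⁻¹ = q ^ 2 • (b⁻¹ * (b * a)⁻¹) := by
    have e : b⁻¹ = (q ^ 2)⁻¹ • ((b * a)⁻¹ * a) := by
      rw [hDa, smul_smul, inv_mul_cancel₀ (pow_ne_zero _ hq0), one_smul]
    have e2 : b⁻¹ * (b * a)⁻¹ = (q ^ 2)⁻¹ • ((b * a)⁻¹ * b⁻¹) := by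
      conv_lhs => rw [e]
      rw [smul_mul_assoc, mul_assoc]
      congr 2
      rw [hDdef, ← mul_assoc, Matrix.mul_nonsing_inv _ hua, one_mul]
    rw [e2, smul_smul, mul_inv_cancel₀ (pow_ne_zero _ hq0), one_smul]
  generalize (b * a)⁻¹ = D at *
  generalize b⁻¹ = B at *
  have hA := aux_pow_comm a b _ hab
  have hD := aux_pow_comm D B _ hDb
  let F : ℕ → ℕ → Matrix (ZMod N × ZMod N) (ZMod N × ZMod N) ℂ := fun i j =>
    (q⁻¹ * q ^ (-(2 * (i : ℤ) * (j : ℤ) + (j : ℤ)))) • ((a ^ i * b) ⊗ₖ (D ^ j * a))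
  have hzN : q ^ (N : ℤ) = 1 := by rw [zpow_natCast, hqN]
  have hL : ((b * a) ⊗ₖ B) * ((N : ℂ)⁻¹ • ∑ i ∈ Finset.range N, ∑ j ∈ Finset.range N,
      (q ^ (-(2 * (i : ℤ) * (j : ℤ) + (j : ℤ)))) • ((a ^ i) ⊗ₖ (D ^ j)))
      = (N : ℂ)⁻¹ • ∑ i ∈ Finset.range N, ∑ j ∈ Finset.range N, F (i+1) (j+1) := by
    rw [mul_smul_comm, Finset.mul_sum]
    congr 1
    refine Finset.sum_congr rfl fun i _ => ?_
    rw [Finset.mul_sum]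
    refine Finset.sum_congr rfl fun j _ => ?_
    simp only [F]
    rw [mul_smul_comm, ← Matrix.mul_kronecker_mul, hA, pow_succ D, mul_assoc (D ^ j), hDa,
      mul_smul_comm, hD, smul_smul, Matrix.smul_kronecker, Matrix.kronecker_smul, smul_smul,
      smul_smul, mul_assoc b a, ← pow_succ']
    congr 1
    rw [← zpow_natCast, ← zpow_natCast, ← zpow_natCast, ← zpow_mul, ← zpow_mul, ← zpow_neg_one]
    simp only [← zpow_natCast, ← zpow_mul, ← zpow_add₀ hq0]
    congr 1
    push_cast
    ring
  have hR : q⁻¹ • (((N : ℂ)⁻¹ • ∑ i ∈ Finset.range N, ∑ j ∈ Finset.range N,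
      (q ^ (-(2 * (i : ℤ) * (j : ℤ) + (j : ℤ)))) • ((a ^ i) ⊗ₖ (D ^ j))) * (b ⊗ₖ a))
      = (N : ℂ)⁻¹ • ∑ i ∈ Finset.range N, ∑ j ∈ Finset.range N, F i j := by
    rw [smul_mul_assoc, Finset.sum_mul, smul_comm, Finset.smul_sum]
    congr 1
    refine Finset.sum_congr rfl fun i _ => ?_
    rw [Finset.sum_mul, Finset.smul_sum]
    refine Finset.sum_congr rfl fun j _ => ?_
    simp only [F]
    rw [smul_mul_assoc, ← Matrix.mul_kronecker_mul, smul_smul]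
  rw [hL, hR]
  congr 1
  have s1 : ∀ i, ∑ j ∈ Finset.range N, F i (j+1) = ∑ j ∈ Finset.range N, F i j := by
    intro i
    apply aux_shift
    simp only [F, hDN, pow_zero]
    congr 2
    rw [show (-(2 * (i : ℤ) * (N : ℤ) + (N : ℤ))) = (N : ℤ) * (-(2 * i + 1)) by ring,
      zpow_mul, hzN, one_zpow]
    simp
  simp only [s1]
  apply aux_shift (fun i => ∑ j ∈ Finset.range N, F i j)
  refine Finset.sum_congr rfl fun j _ => ?_
  simp only [F, haN, pow_zero]
  congr 2
  rw [show (-(2 * (N : ℤ) * (j : ℤ) + (j : ℤ))) = (N : ℤ) * (-(2 * j)) + -j by ring,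
    zpow_add₀ hq0, zpow_mul, hzN, one_zpow]
  simp
end

section
/- The operator Υ satisfies Υ ∘ (A₂ ⊗ I) = q · (A₂ ⊗ A₁A₀) ∘ Υ in End(ℂ^N ⊗ ℂ^N), where I = id_{ℂ^N}. -/
open Finset Kronecker

theorem qval_add_one (N : ℕ) [NeZero N] (q : ℂ) (hq : q ^ N = 1) (k : ZMod N) :
    q ^ (k + 1).val = q ^ k.val * q := by
  have h : (k + 1).val % N = (k.val + 1) % N := by
    apply (ZMod.natCast_eq_natCast_iff' _ _ _).1
    simp
  rw [pow_eq_pow_mod _ hq, h, ← pow_eq_pow_mod _ hq, pow_succ]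

theorem B_apply (N : ℕ) [NeZero N] (q : ℂ) (j k : ZMod N) :
    (A1 N * A0 N q) j k = if j = k + 1 then (q ^ k.val) ^ 2 else 0 := by
  simp only [A0, A1, Matrix.mul_diagonal]
  rw [mul_comm 2, pow_mul]
  split_ifs <;> simp

theorem B_pow (N : ℕ) [NeZero N] (q : ℂ) (hq : q ^ N = 1) (hq0 : q ≠ 0) (m : ℕ) (j k : ZMod N) :
    ((A1 N * A0 N q) ^ m) j k =
      if j = k + m then q⁻¹ ^ m * (q ^ (m * m) * (q ^ k.val) ^ (2 * m)) else 0 := by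
  induction m generalizing j k with
  | zero => simp [Matrix.one_apply]
  | succ m ih =>
    rw [pow_succ, Matrix.mul_apply]
    simp only [B_apply]
    simp only [mul_ite, mul_zero, Finset.sum_ite_eq', Finset.sum_ite_eq, Finset.mem_univ, if_true]
    rw [ih, qval_add_one N q hq]
    have e : k + 1 + (m : ZMod N) = k + ((m + 1 : ℕ) : ZMod N) := by push_cast; ring
    rw [e]
    split_ifs
    · have h1 : q⁻¹ * q = 1 := inv_mul_cancel₀ hq0
      rw [show (q⁻¹ : ℂ) ^ (m+1) * (q ^ ((m+1) * (m+1)) * (q ^ k.val) ^ (2 * (m+1))) =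
        (q⁻¹ * q) * (q⁻¹ ^ m * (q ^ (m * m) * (q ^ k.val * q) ^ (2 * m)) * (q ^ k.val) ^ 2) by ring,
        h1, one_mul]
    · simp

theorem B_pow_N (N : ℕ) [NeZero N] (q : ℂ) (hq : q ^ N = 1) (hq0 : q ≠ 0) :
    (A1 N * A0 N q) ^ N = 1 := by
  ext j k
  rw [B_pow N q hq hq0]
  have h : (q ^ k.val) ^ (2 * N) = 1 := by
    rw [← pow_mul, show k.val * (2 * N) = N * (2 * k.val) by ring, pow_mul, hq, one_pow]
  rw [h, pow_mul, hq, inv_pow, hq]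
  simp [Matrix.one_apply]

theorem A0_A2 (N : ℕ) [NeZero N] (q : ℂ) (hq : q ^ N = 1) (hq0 : q ≠ 0) :
    A0 N q * A2 N q = (q⁻¹ ^ 2) • (A2 N q * A0 N q) := by
  ext j k
  simp only [A0, Matrix.smul_apply, Matrix.mul_diagonal, Matrix.diagonal_mul, A2, smul_eq_mul]
  split_ifs with h
  · have hk : k = j + 1 := by rw [h]; ring
    have := qval_add_one N q hq j
    rw [← hk] at this
    rw [mul_comm 2, pow_mul, mul_comm 2 k.val, pow_mul, this]
    field_simp
  · simp

theorem A0_pow_A2 (N : ℕ) [NeZero N] (q : ℂ) (hq : q ^ N = 1) (hq0 : q ≠ 0) (i : ℕ) :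
    A0 N q ^ i * A2 N q = (q⁻¹ ^ (2 * i)) • (A2 N q * A0 N q ^ i) := by
  induction i with
  | zero => simp
  | succ i ih =>
    rw [pow_succ, mul_assoc, A0_A2 N q hq hq0, Matrix.mul_smul, ← mul_assoc, ih, Matrix.smul_mul,
      smul_smul, mul_assoc, ← pow_add]
    congr 2
    ring

/-- `Υ ∘ (A₂ ⊗ I) = q · (A₂ ⊗ A₁A₀) ∘ Υ`. -/
theorem Ups_A2_commutation (N : ℕ) [NeZero N] (hN : 3 ≤ N) (hNodd : Odd N)
    (q : ℂ) (hq : IsPrimitiveRoot q N) :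
    Ups N q * (A2 N q ⊗ₖ (1 : Matrix (ZMod N) (ZMod N) ℂ)) =
      q • ((A2 N q ⊗ₖ (A1 N * A0 N q)) * Ups N q) := by
  have hq1 := hq.pow_eq_one
  have hq0 : q ≠ 0 := hq.ne_zero (NeZero.ne N)
  have hBN := B_pow_N N q hq1 hq0
  unfold Ups
  generalize A1 N * A0 N q = B at *
  have hdet : IsUnit B.det := by
    rw [← Matrix.isUnit_iff_isUnit_det]
    exact IsUnit.of_pow_eq_one hBN (NeZero.ne N)
  have hBB : B * B⁻¹ = 1 := Matrix.mul_nonsing_inv B hdet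
  have hBiN : B⁻¹ ^ N = 1 := by
    rw [Matrix.inv_pow', hBN, inv_one]
  rw [Matrix.smul_mul, Matrix.mul_smul, smul_comm q]
  congr 1
  simp only [Finset.sum_mul, Finset.mul_sum, Finset.smul_sum, Matrix.smul_mul, Matrix.mul_smul,
    ← Matrix.mul_kronecker_mul, mul_one, A0_pow_A2 N q hq1 hq0, Matrix.smul_kronecker, smul_smul]
  refine Finset.sum_congr rfl fun i _ => ?_
  set g : ℕ → Matrix (ZMod N × ZMod N) (ZMod N × ZMod N) ℂ := fun j =>
    (q * q ^ (-(2 * (i : ℤ) * (j : ℤ) + (j : ℤ)))) • ((A2 N q * A0 N q ^ i) ⊗ₖ (B * B⁻¹ ^ j)) with hg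
  have hg0 : g N = g 0 := by
    simp only [hg, hBiN, pow_zero]
    rw [show -(2 * (i : ℤ) * (N : ℤ) + (N : ℤ)) = (N : ℤ) * (-(2 * i + 1)) by ring, zpow_mul,
      zpow_natCast, hq1]
    simp
  have hs : ∑ j ∈ Finset.range N, g (j + 1) = ∑ j ∈ Finset.range N, g j := by
    have h1 := Finset.sum_range_succ g N
    rw [Finset.sum_range_succ' g N, hg0] at h1
    exact add_right_cancel h1
  refine Eq.trans (Finset.sum_congr rfl fun j _ => ?_) hs
  simp only [hg]
  rw [pow_succ' B⁻¹, ← mul_assoc, hBB, one_mul]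
  congr 1
  rw [inv_pow, ← zpow_natCast, ← zpow_neg, ← zpow_add₀ hq0, ← zpow_one_add₀ hq0]
  congr 1
  push_cast
  ring
end

section
/- The unital ℂ-subalgebra of End(ℂ^N ⊗ ℂ^N) generated by the operators A₀⊗I, I⊗A₁, I⊗A₂, A₂⊗I and A₁⊗A₀ (I = id_{ℂ^N}) equals all of End(ℂ^N ⊗ ℂ^N). Consequently, for any nonzero complex numbers c₀, c₁, c₂, d₀, d₁, d₂, the five operators c₀A₀⊗I, d₁I⊗A₁, d₂I⊗A₂, c₂A₂⊗I, c₁d₀A₁⊗A₀ have no common invariant subspace of ℂ^N ⊗ ℂ^N other than 0 and ℂ^N ⊗ ℂ^N. -/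
open Finset Kronecker

lemma single_diag_mem {n : Type*} [Fintype n] [DecidableEq n] (S : Subalgebra ℂ (Matrix n n ℂ))
    (d : n → ℂ) (hd : Function.Injective d) (h : Matrix.diagonal d ∈ S) (i : n) :
    Matrix.single i i (1 : ℂ) ∈ S := by
  have h1 : Polynomial.aeval (Matrix.diagonal d) (Lagrange.basis univ d i) ∈ S :=
    Algebra.adjoin_le (Set.singleton_subset_iff.mpr h) (Polynomial.aeval_mem_adjoin_singleton ℂ _)
  have h2 : Polynomial.aeval (Matrix.diagonal d) (Lagrange.basis univ d i)
      = Matrix.single i i (1 : ℂ) := by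
    have h3 := Polynomial.aeval_algHom_apply (Matrix.diagonalAlgHom (n := n) (α := ℂ) ℂ) d
      (Lagrange.basis univ d i)
    simp only [Matrix.diagonalAlgHom_apply] at h3
    rw [h3, ← Matrix.diagonal_single]
    congr 1
    funext k
    rw [Polynomial.aeval_pi_apply₂, Polynomial.aeval_def, Polynomial.eval₂_eq_eval_map]
    simp only [Algebra.algebraMap_self, Polynomial.map_id]
    by_cases hk : k = i
    · subst hk
      rw [Lagrange.eval_basis_self hd.injOn (mem_univ _)]
      simp
    · rw [Lagrange.eval_basis_of_ne (Ne.symm hk) (mem_univ _)]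
      simp [hk]
  rwa [h2] at h1

lemma shift_top {N : ℕ} [NeZero N] (S : Subalgebra ℂ (Matrix (ZMod N) (ZMod N) ℂ))
    (d : ZMod N → ℂ) (hd : Function.Injective d) (h : Matrix.diagonal d ∈ S)
    (B : Matrix (ZMod N) (ZMod N) ℂ) (hB : B ∈ S) (s : ZMod N)
    (hs : ∀ x : ZMod N, ∃ m : ℕ, x = m * s) (hBs : ∀ k, B (k + s) k ≠ 0) (i j : ZMod N) :
    Matrix.single i j (1 : ℂ) ∈ S := by
  have hE := single_diag_mem S d hd h
  have h1 : ∀ k, Matrix.single (k + s) k (1 : ℂ) ∈ S := by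
    intro k
    have := S.smul_mem (S.mul_mem (S.mul_mem (hE (k + s)) hB) (hE k)) (B (k + s) k)⁻¹
    rw [Matrix.single_mul_mul_single] at this
    simpa [hBs k] using this
  have h2 : ∀ (m : ℕ) k, Matrix.single (k + m * s) k (1 : ℂ) ∈ S := by
    intro m k
    induction m with
    | zero => simpa using hE k
    | succ m ih =>
      have := S.mul_mem (h1 (k + m * s)) ih
      rw [Matrix.single_mul_single_same] at this
      have e : k + ((m + 1 : ℕ) : ZMod N) * s = k + m * s + s := by push_cast; ring
      rw [e]
      simpa using this
  obtain ⟨m, hm⟩ := hs (i - j)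
  have := h2 m j
  rwa [← hm, add_sub_cancel] at this

/-- `A ↦ A ⊗ 1`. -/
noncomputable def kronL (n : Type) [Fintype n] [DecidableEq n] :
    Matrix n n ℂ →ₐ[ℂ] Matrix (n × n) (n × n) ℂ :=
  AlgHom.ofLinearMap
    { toFun := fun A => A ⊗ₖ (1 : Matrix n n ℂ)
      map_add' := fun A B => Matrix.add_kronecker A B 1
      map_smul' := fun r A => Matrix.smul_kronecker r A 1 }
    (by simp) (fun A B => by simp [← Matrix.mul_kronecker_mul])

/-- `A ↦ 1 ⊗ A`. -/
noncomputable def kronR (n : Type) [Fintype n] [DecidableEq n] :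
    Matrix n n ℂ →ₐ[ℂ] Matrix (n × n) (n × n) ℂ :=
  AlgHom.ofLinearMap
    { toFun := fun A => (1 : Matrix n n ℂ) ⊗ₖ A
      map_add' := fun A B => Matrix.kronecker_add 1 A B
      map_smul' := fun r A => Matrix.kronecker_smul r 1 A }
    (by simp) (fun A B => by simp [← Matrix.mul_kronecker_mul])

lemma pow_inj_aux {N : ℕ} [NeZero N] (hNodd : Odd N) {q : ℂ} (hq : IsPrimitiveRoot q N) :
    Function.Injective (fun k : ZMod N => q ^ (2 * k.val)) := by
  intro a b hab
  have hq2 : IsPrimitiveRoot (q ^ 2) N :=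
    hq.pow_of_coprime 2 (Nat.coprime_two_left.mpr hNodd)
  simp only [pow_mul] at hab
  exact ZMod.val_injective N (hq2.pow_inj (ZMod.val_lt a) (ZMod.val_lt b) hab)

lemma A2_mul_A1 {N : ℕ} [NeZero N] (q : ℂ) :
    A2 N q * A1 N = Matrix.diagonal fun k => q ^ ((1 : ℤ) - 2 * ((k + 1).val : ℤ)) := by
  ext i j
  simp only [Matrix.mul_apply, A2, A1, Matrix.diagonal_apply]
  rw [Finset.sum_eq_single (j + 1)]
  · by_cases h : i = j <;> simp [h]
  · intro b _ hb
    simp [hb]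
  · simp

lemma alg_top (N : ℕ) [NeZero N] (hNodd : Odd N) (q : ℂ) (hq : IsPrimitiveRoot q N)
    (S : Subalgebra ℂ (Matrix (ZMod N × ZMod N) (ZMod N × ZMod N) ℂ))
    (h0 : A0 N q ⊗ₖ (1 : Matrix (ZMod N) (ZMod N) ℂ) ∈ S)
    (h1 : (1 : Matrix (ZMod N) (ZMod N) ℂ) ⊗ₖ A1 N ∈ S)
    (h2 : (1 : Matrix (ZMod N) (ZMod N) ℂ) ⊗ₖ A2 N q ∈ S)
    (h3 : A2 N q ⊗ₖ (1 : Matrix (ZMod N) (ZMod N) ℂ) ∈ S) : S = ⊤ := by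
  have hq0 : q ≠ 0 := hq.ne_zero (NeZero.ne N)
  have hL : ∀ i j, Matrix.single i j (1 : ℂ) ∈ S.comap (kronL (ZMod N)) := by
    refine shift_top _ _ (pow_inj_aux hNodd hq) h0 (A2 N q) h3 (-1) ?_ ?_
    · intro x
      exact ⟨(-x).val, by simp⟩
    · intro k
      simp [A2, ← sub_eq_add_neg, zpow_ne_zero, hq0]
  have hR : ∀ i j, Matrix.single i j (1 : ℂ) ∈ S.comap (kronR (ZMod N)) := by
    have hm : A2 N q * A1 N ∈ S.comap (kronR (ZMod N)) := Subalgebra.mul_mem _ h2 h1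
    rw [A2_mul_A1] at hm
    refine shift_top _ _ ?_ hm (A1 N) h1 1 ?_ ?_
    · intro a b hab
      have e : ∀ k : ZMod N, q ^ ((1 : ℤ) - 2 * ((k + 1).val : ℤ)) =
          q * (q ^ (2 * (k + 1).val))⁻¹ := by
        intro k
        rw [zpow_sub₀ hq0, zpow_one, div_eq_mul_inv]
        norm_cast
      simp only [e] at hab
      have := inv_injective (mul_left_cancel₀ hq0 hab)
      exact add_right_cancel (pow_inj_aux hNodd hq this)
    · intro x
      exact ⟨x.val, by simp⟩
    · intro k
      simp [A1]
  rw [eq_top_iff]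
  intro M _
  rw [Matrix.matrix_eq_sum_single M]
  refine S.sum_mem fun i _ => S.sum_mem fun j _ => ?_
  have := S.smul_mem (S.mul_mem (hL i.1 j.1) (hR i.2 j.2)) (M i j)
  have e : (kronL (ZMod N)) (Matrix.single i.1 j.1 1) * (kronR (ZMod N)) (Matrix.single i.2 j.2 1)
      = Matrix.single i j (1 : ℂ) := by
    change (Matrix.single i.1 j.1 (1 : ℂ) ⊗ₖ (1 : Matrix (ZMod N) (ZMod N) ℂ)) *
      ((1 : Matrix (ZMod N) (ZMod N) ℂ) ⊗ₖ Matrix.single i.2 j.2 (1 : ℂ)) = _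
    rw [← Matrix.mul_kronecker_mul, mul_one, one_mul, Matrix.single_kronecker_single]
    simp
  have e' : M i j • Matrix.single i j (1 : ℂ) = Matrix.single i j (M i j) := by
    simp [Matrix.smul_single]
  rw [← e', ← e]
  exact this

/-- Matrices preserving a subspace. -/
def stab {n : Type} [Fintype n] [DecidableEq n] (p : Submodule ℂ (n → ℂ)) :
    Subalgebra ℂ (Matrix n n ℂ) where
  carrier := {M | ∀ x ∈ p, M.mulVec x ∈ p}
  mul_mem' := by
    intro a b ha hb x hx
    rw [← Matrix.mulVec_mulVec]
    exact ha _ (hb x hx)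
  add_mem' := by
    intro a b ha hb x hx
    rw [Matrix.add_mulVec]
    exact p.add_mem (ha x hx) (hb x hx)
  algebraMap_mem' := by
    intro r x hx
    rw [Algebra.algebraMap_eq_smul_one, Matrix.smul_mulVec, Matrix.one_mulVec]
    exact p.smul_mem r hx

lemma stab_of_smul {n : Type} [Fintype n] [DecidableEq n] (p : Submodule ℂ (n → ℂ))
    (c : ℂ) (hc : c ≠ 0) (M : Matrix n n ℂ) (h : ∀ x ∈ p, (c • M).mulVec x ∈ p) :
    M ∈ stab p := by
  have h' : c • M ∈ stab p := h
  have := (stab p).smul_mem h' c⁻¹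
  rwa [smul_smul, inv_mul_cancel₀ hc, one_smul] at this

lemma bot_or_top_of_stab {n : Type} [Fintype n] [DecidableEq n] (p : Submodule ℂ (n → ℂ))
    (h : stab p = ⊤) : p = ⊥ ∨ p = ⊤ := by
  rw [or_iff_not_imp_left]
  intro hp
  obtain ⟨x, hx, hx0⟩ := p.exists_mem_ne_zero_of_ne_bot hp
  obtain ⟨i, hi⟩ := Function.ne_iff.mp hx0
  have hi : x i ≠ 0 := hi
  rw [eq_top_iff]
  intro y _
  have hM : Matrix.vecMulVec y (Pi.single i (x i)⁻¹) ∈ stab p := by rw [h]; trivial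
  have := hM x hx
  rw [Matrix.vecMulVec_mulVec] at this
  simpa [hi] using this

/-- The unital subalgebra of `End(ℂ^N ⊗ ℂ^N)` generated by `A₀⊗I, I⊗A₁, I⊗A₂, A₂⊗I,
A₁⊗A₀` is everything; consequently, for nonzero scalars `c₀, c₁, c₂, d₀, d₁, d₂`, the
operators `c₀A₀⊗I, d₁I⊗A₁, d₂I⊗A₂, c₂A₂⊗I, c₁d₀A₁⊗A₀` have no common invariant subspace
other than `0` and the whole space (irreducibility of the standard local representations
of the Chekhov–Fock algebra of an ideal square). -/
theorem square_local_representation_irreducible (N : ℕ) [NeZero N] (hN : 3 ≤ N)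
    (hNodd : Odd N) (q : ℂ) (hq : IsPrimitiveRoot q N) :
    Algebra.adjoin ℂ
      ({A0 N q ⊗ₖ (1 : Matrix (ZMod N) (ZMod N) ℂ),
        (1 : Matrix (ZMod N) (ZMod N) ℂ) ⊗ₖ A1 N,
        (1 : Matrix (ZMod N) (ZMod N) ℂ) ⊗ₖ A2 N q,
        A2 N q ⊗ₖ (1 : Matrix (ZMod N) (ZMod N) ℂ),
        A1 N ⊗ₖ A0 N q} :
        Set (Matrix (ZMod N × ZMod N) (ZMod N × ZMod N) ℂ)) = ⊤ ∧
    ∀ c₀ c₁ c₂ d₀ d₁ d₂ : ℂ, c₀ ≠ 0 → c₁ ≠ 0 → c₂ ≠ 0 → d₀ ≠ 0 → d₁ ≠ 0 → d₂ ≠ 0 →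
      ∀ p : Submodule ℂ (ZMod N × ZMod N → ℂ),
        (∀ x ∈ p, (c₀ • (A0 N q ⊗ₖ (1 : Matrix (ZMod N) (ZMod N) ℂ))).mulVec x ∈ p) →
        (∀ x ∈ p, (d₁ • ((1 : Matrix (ZMod N) (ZMod N) ℂ) ⊗ₖ A1 N)).mulVec x ∈ p) →
        (∀ x ∈ p, (d₂ • ((1 : Matrix (ZMod N) (ZMod N) ℂ) ⊗ₖ A2 N q)).mulVec x ∈ p) →
        (∀ x ∈ p, (c₂ • (A2 N q ⊗ₖ (1 : Matrix (ZMod N) (ZMod N) ℂ))).mulVec x ∈ p) →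
        (∀ x ∈ p, ((c₁ * d₀) • (A1 N ⊗ₖ A0 N q)).mulVec x ∈ p) →
        p = ⊥ ∨ p = ⊤ := by
  refine ⟨?_, ?_⟩
  · apply alg_top N hNodd q hq <;> exact Algebra.subset_adjoin (by simp)
  · intro c₀ c₁ c₂ d₀ d₁ d₂ hc₀ _ hc₂ _ hd₁ hd₂ p h0 h1 h2 h3 _
    exact bot_or_top_of_stab p (alg_top N hNodd q hq (stab p) (stab_of_smul p _ hc₀ _ h0)
      (stab_of_smul p _ hd₁ _ h1) (stab_of_smul p _ hd₂ _ h2) (stab_of_smul p _ hc₂ _ h3))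
end
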